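/- arXiv:0808.1442 — 2 statements merged into one kernel-verified Lean document; each statement's English description precedes it below -/
import Mathlib

section
/- Let τ ∈ ℍ and u, v ∈ ℂ with u, v ∉ ℤτ + ℤ, and write a = e^{2πiu}, b = e^{2πiv}. Then: (1) μ(u,v;τ) = μ(v,u;τ); (2) μ(u+1,v;τ) = −μ(u,v;τ); (3) a^{−1}·b·q^{−1/2}·μ(u+τ,v;τ) = −μ(u,v;τ) + a^{−1/2}·b^{1/2}·q^{−1/8}, where a^{−1/2} = e^{−πiu}, b^{1/2} = e^{πiv}, q^{−1/2} = e^{−πiτ}, q^{−1/8} = e^{−πiτ/4}; (4) μ(u,v;τ+1) = e^{−πi/4}·μ(u,v;τ); (5) (τ/i)^{−1/2}·e^{πi(u−v)²/τ}·μ(u/τ, v/τ; −1/τ) = −μ(u,v;τ) + (1/2)·𝔥(u−v;τ), where 𝔥(z;τ) = ∫_{−∞}^{∞} e^{πix²τ − 2πxz}/cosh(πx) dx is the Mordell integral and (τ/i)^{−1/2} is the principal branch. -/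
noncomputable section
open Complex Real

/-- `q = e^{2πiτ}`. -/
def nome (τ : ℂ) : ℂ := Complex.exp (2 * (π : ℂ) * I * τ)

/-- Jacobi theta `θ(v;τ) = Σ_{ν∈ℤ+1/2} (−1)^{ν−1/2} e^{2πivν} q^{ν²/2}`. -/
def jtheta (v τ : ℂ) : ℂ :=
  ∑' n : ℤ, (-1 : ℂ) ^ n * Complex.exp (2 * (π : ℂ) * I * v * ((n : ℂ) + 1 / 2)) *
    Complex.exp ((π : ℂ) * I * τ * ((n : ℂ) + 1 / 2) ^ 2)

/-- Zwegers's μ-function. -/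
def mu (u v τ : ℂ) : ℂ :=
  (Complex.exp ((π : ℂ) * I * u) / jtheta v τ) *
    ∑' n : ℤ, (-Complex.exp (2 * (π : ℂ) * I * v)) ^ n * nome τ ^ ((n * (n + 1)) / 2 : ℤ) /
      (1 - Complex.exp (2 * (π : ℂ) * I * u) * nome τ ^ (n : ℤ))

/-- The Mordell integral `𝔥(z;τ) = ∫_ℝ e^{πix²τ−2πxz}/cosh(πx) dx`. -/
def mordell (z τ : ℂ) : ℂ :=
  ∫ x : ℝ, Complex.exp ((π : ℂ) * I * (x : ℂ) ^ 2 * τ - 2 * (π : ℂ) * (x : ℂ) * z) /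
    Complex.cosh ((π : ℂ) * (x : ℂ))

open Filter Topology Set

def InL (τ v : ℂ) : Prop := ∃ m n : ℤ, v = (m : ℂ) * τ + (n : ℂ)

lemma int_isolated (x : ℝ) : ∀ᶠ y : ℝ in 𝓝 x, (∃ n : ℤ, y = (n : ℝ)) → y = x := by
  have h : Ioo ((⌈x⌉ : ℝ) - 1) (⌊x⌋ + 1) ∈ 𝓝 x := by
    apply Ioo_mem_nhds
    · linarith [Int.ceil_lt_add_one x]
    · exact Int.lt_floor_add_one x
  filter_upwards [h] with y hy ⟨n, hn⟩
  subst hn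
  have h1 : ⌈x⌉ ≤ n := by
    have : ((⌈x⌉ - 1 : ℤ) : ℝ) < n := by push_cast; exact hy.1
    have := Int.cast_lt.mp this
    omega
  have h2 : n ≤ ⌊x⌋ := by
    have : (n : ℝ) < ((⌊x⌋ + 1 : ℤ) : ℝ) := by push_cast; exact hy.2
    have := Int.cast_lt.mp this
    omega
  exact le_antisymm (Int.le_floor.mp h2) (Int.ceil_le.mp h1)

lemma InL_isolated {τ : ℂ} (hτ : 0 < τ.im) (c : ℂ) : ∀ᶠ v in 𝓝 c, InL τ v → v = c := by
  have hs : Tendsto (fun v : ℂ => v.im / τ.im) (𝓝 c) (𝓝 (c.im / τ.im)) :=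
    Continuous.tendsto (by fun_prop) c
  have ht : Tendsto (fun v : ℂ => v.re - v.im / τ.im * τ.re) (𝓝 c)
      (𝓝 (c.re - c.im / τ.im * τ.re)) :=
    Continuous.tendsto (by fun_prop) c
  filter_upwards [hs.eventually (int_isolated _), ht.eventually (int_isolated _)] with v h1 h2 hv
  obtain ⟨m, n, hv⟩ := hv
  have e1 : v.im / τ.im = m := by
    rw [hv]; simp; field_simp
  have e2 : v.re - v.im / τ.im * τ.re = n := by
    rw [e1, hv]; simp
  have k1 := h1 ⟨m, e1⟩
  have k2 := h2 ⟨n, e2⟩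
  have k3 : v.im = c.im := by
    field_simp at k1; exact k1
  have k4 : v.re = c.re := by
    rw [k3] at k2; linarith
  exact Complex.ext k4 k3

lemma InL_punct {τ : ℂ} (hτ : 0 < τ.im) (c : ℂ) : ∀ᶠ v in 𝓝[≠] c, ¬ InL τ v := by
  rw [eventually_nhdsWithin_iff]
  filter_upwards [InL_isolated hτ c] with v hv hne hI
  exact hne (hv hI)

lemma InL_compl {τ : ℂ} (hτ : 0 < τ.im) {c : ℂ} (hc : ¬ InL τ c) : ∀ᶠ v in 𝓝 c, ¬ InL τ v := by
  filter_upwards [InL_isolated hτ c] with v hv hI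
  rw [hv hI] at hI
  exact hc hI

lemma InL_add {τ v w : ℂ} (hw : InL τ w) : InL τ (v + w) ↔ InL τ v := by
  obtain ⟨m, n, hw⟩ := hw
  constructor
  · rintro ⟨a, b, h⟩
    exact ⟨a - m, b - n, by push_cast; linear_combination h - hw⟩
  · rintro ⟨a, b, h⟩
    exact ⟨a + m, b + n, by push_cast; linear_combination h + hw⟩

lemma InL_one (τ : ℂ) : InL τ 1 := ⟨0, 1, by simp⟩
lemma InL_tau (τ : ℂ) : InL τ τ := ⟨1, 0, by simp⟩
lemma InL_mn (τ : ℂ) (m n : ℤ) : InL τ (m * τ + n) := ⟨m, n, rfl⟩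

lemma InL_neg {τ v : ℂ} : InL τ (-v) ↔ InL τ v := by
  constructor
  · rintro ⟨a, b, h⟩
    exact ⟨-a, -b, by push_cast; linear_combination -h⟩
  · rintro ⟨a, b, h⟩
    exact ⟨-a, -b, by push_cast; linear_combination -h⟩

lemma iter_period {τ : ℂ} {F : ℂ → ℂ} {β w : ℂ} (hβ : β ≠ 0) (hw : InL τ w)
    (h2 : ∀ v, ¬ InL τ v → F (v + w) = β * F v) (m : ℤ) :
    ∀ v, ¬ InL τ v → F (v + m * w) = β ^ m * F v := by
  have hmw : ∀ m : ℤ, InL τ (m * w) := by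
    obtain ⟨a, b, h⟩ := hw
    intro m
    exact ⟨m * a, m * b, by rw [h]; push_cast; ring⟩
  induction m using Int.induction_on with
  | zero => intro v _; simp
  | succ k ih =>
    intro v hv
    have := h2 (v + (k : ℤ) * w) (by rwa [InL_add (hmw _)])
    rw [ih v hv] at this
    rw [zpow_add₀ hβ, zpow_one]
    convert this using 1
    · push_cast; ring_nf
    · ring
  | pred k ih =>
    intro v hv
    have := h2 (v + (-(k : ℤ) - 1 : ℤ) * w) (by rwa [InL_add (hmw _)])
    have e : v + (-(k : ℤ) - 1 : ℤ) * w + w = v + (-(k : ℤ) : ℤ) * w := by push_cast; ring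
    rw [e, ih v hv] at this
    rw [zpow_sub₀ hβ, zpow_one]
    field_simp
    linear_combination -this

lemma const_of_periods {τ : ℂ} (hτ : 0 < τ.im) (F : ℂ → ℂ)
    (hd : ∀ c, ¬ InL τ c → DifferentiableAt ℂ F c) (g : ℂ → ℂ) (hg : AnalyticAt ℂ g 0)
    (hg0 : g 0 = 0) (hFg : ∀ᶠ u in 𝓝[≠] (0 : ℂ), F u = g u / u) (α β : ℂ)
    (hα : ‖α‖ = 1) (hβ : ‖β‖ = 1)
    (h1 : ∀ v, ¬ InL τ v → F (v + 1) = α * F v)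
    (h2 : ∀ v, ¬ InL τ v → F (v + τ) = β * F v) :
    ∃ K, ∀ v, ¬ InL τ v → F v = K := by
  have hα0 : α ≠ 0 := by rintro rfl; simp at hα
  have hβ0 : β ≠ 0 := by rintro rfl; simp at hβ
  have hper : ∀ (m n : ℤ) (v : ℂ), ¬ InL τ v → F (v + (m * τ + n)) = α ^ n * (β ^ m * F v) := by
    intro m n v hv
    have a := iter_period hβ0 (InL_tau τ) h2 m v hv
    have hv' : ¬ InL τ (v + m * τ) := by
      rwa [InL_add ⟨m, 0, by simp⟩]
    have b := iter_period hα0 (InL_one τ) h1 n _ hv'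
    rw [a] at b
    rw [← b]; ring_nf
  have hex : ∀ c, ∃ G : ℂ → ℂ, AnalyticAt ℂ G c ∧ (∀ᶠ v in 𝓝[≠] c, F v = G v) ∧
      (¬ InL τ c → G = F) := by
    intro c
    by_cases hc : InL τ c
    · obtain ⟨m, n, hc'⟩ := hc
      have hds : AnalyticAt ℂ (dslope g 0) 0 := by
        obtain ⟨p, hp⟩ := hg
        exact ⟨_, hp.has_fpower_series_dslope_fslope⟩
      refine ⟨fun v => α ^ n * (β ^ m * dslope g 0 (v - c)), ?_, ?_, fun h => absurd ⟨m, n, hc'⟩ h⟩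
      · have : AnalyticAt ℂ (fun v => dslope g 0 (v - c)) c := by
          apply AnalyticAt.fun_comp (f := fun v => v - c)
          · simpa using hds
          · fun_prop
        fun_prop
      · have ht : Tendsto (fun v : ℂ => v - c) (𝓝[≠] c) (𝓝[≠] 0) := by
          apply tendsto_nhdsWithin_of_tendsto_nhds_of_eventually_within
          · apply tendsto_nhdsWithin_of_tendsto_nhds
            have : Continuous fun v : ℂ => v - c := by fun_prop
            simpa using this.tendsto c
          · filter_upwards [self_mem_nhdsWithin] with v hv
            simpa [sub_eq_zero] using hv
        filter_upwards [ht.eventually hFg, ht.eventually (InL_punct hτ 0),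
          self_mem_nhdsWithin] with v k1 k2 k3
        have := hper m n (v - c) k2
        rw [← hc', sub_add_cancel, k1] at this
        rw [this, dslope_of_ne _ (by simpa [sub_eq_zero] using k3), slope_def_field, hg0]
        simp
    · refine ⟨F, ?_, Eventually.of_forall fun _ => rfl, fun _ => rfl⟩
      rw [Complex.analyticAt_iff_eventually_differentiableAt]
      filter_upwards [InL_compl hτ hc] with v hv using hd v hv
  choose G hGa hGF hGe using hex
  have hGeq : ∀ v, ¬ InL τ v → G v v = F v := fun v hv => by rw [hGe v hv]
  have hG : Differentiable ℂ (fun v => G v v) := by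
    intro c
    have : (fun v => G v v) =ᶠ[𝓝 c] G c := by
      have k1 := hGF c
      rw [eventually_nhdsWithin_iff] at k1
      filter_upwards [k1, InL_isolated hτ c] with v k1 k2
      by_cases hv : v = c
      · rw [hv]
      · rw [hGeq v (fun h => hv (k2 h)), k1 hv]
    exact (hGa c).differentiableAt.congr_of_eventuallyEq this
  obtain ⟨C, hC⟩ : ∃ C, ∀ p ∈ (Icc (0:ℝ) 1 ×ˢ Icc (0:ℝ) 1),
      ‖(fun v => G v v) ((p.1 : ℂ) * τ + p.2)‖ ≤ C := by
    apply IsCompact.exists_bound_of_continuousOn (isCompact_Icc.prod isCompact_Icc)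
    apply Continuous.continuousOn
    exact hG.continuous.comp (by fun_prop)
  have hb1 : ∀ v, ¬ InL τ v → ‖G v v‖ ≤ C := by
    intro v hv
    set s := v.im / τ.im with hs
    set t := v.re - s * τ.re with ht
    have hv2 : v = (s : ℂ) * τ + t := by
      apply Complex.ext
      · simp [ht]
      · simp [hs]; field_simp
    set v0 : ℂ := ((Int.fract s : ℝ) : ℂ) * τ + (Int.fract t : ℝ) with hv0
    have e : v = v0 + ((⌊s⌋ : ℤ) * τ + (⌊t⌋ : ℤ)) := by
      rw [hv2, hv0, Int.fract, Int.fract]; push_cast; ring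
    have hv0' : ¬ InL τ v0 := by
      rw [e, InL_add (InL_mn _ _ _)] at hv; exact hv
    rw [hGeq v hv]
    have := hper ⌊s⌋ ⌊t⌋ v0 hv0'
    rw [← e] at this
    rw [this, norm_mul, norm_mul, norm_zpow, norm_zpow, hα, hβ, one_zpow, one_zpow, one_mul,
      one_mul, ← hGeq v0 hv0']
    exact hC (Int.fract s, Int.fract t) ⟨⟨Int.fract_nonneg _, (Int.fract_lt_one _).le⟩,
      ⟨Int.fract_nonneg _, (Int.fract_lt_one _).le⟩⟩
  have hb : ∀ v, ‖G v v‖ ≤ C := by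
    intro v
    have : Tendsto (fun w => ‖G w w‖) (𝓝[≠] v) (𝓝 ‖G v v‖) :=
      (hG.continuous.norm.tendsto v).mono_left nhdsWithin_le_nhds
    apply le_of_tendsto this
    filter_upwards [InL_punct hτ v] with w hw using hb1 w hw
  refine ⟨G 0 0, fun v hv => ?_⟩
  rw [← hGeq v hv]
  apply hG.apply_eq_apply_of_bounded
  rw [isBounded_iff_forall_norm_le]
  exact ⟨C, by rintro _ ⟨x, rfl⟩; exact hb x⟩

def EE (u τ : ℂ) (n : ℤ) : ℂ := Complex.exp (2 * (π : ℂ) * I * (u + n * τ))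

def TT (n : ℤ) (v τ : ℂ) : ℂ := jacobiTheta₂_term n (v + τ / 2 + 1 / 2) τ

def SS (u v τ : ℂ) : ℂ := ∑' n : ℤ, TT n v τ / (1 - EE u τ n)

def AA (u v τ : ℂ) : ℂ := Complex.exp ((π : ℂ) * I * u) * SS u v τ

lemma neg_one_zpow_eq (n : ℤ) : (-1 : ℂ) ^ n = Complex.exp ((n : ℂ) * ((π : ℂ) * I)) := by
  rw [Complex.exp_int_mul, Complex.exp_pi_mul_I]

lemma TT_eq (n : ℤ) (v τ : ℂ) :
    (-Complex.exp (2 * (π : ℂ) * I * v)) ^ n * nome τ ^ ((n * (n + 1)) / 2 : ℤ) = TT n v τ := by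
  obtain ⟨k, hk⟩ := Int.even_mul_succ_self n
  have hk2 : (n * (n + 1)) / 2 = k := by omega
  have hkc : (n : ℂ) * (n + 1) = k + k := by exact_mod_cast hk
  rw [hk2, neg_eq_neg_one_mul, mul_zpow, neg_one_zpow_eq, nome, ← Complex.exp_int_mul,
    ← Complex.exp_int_mul, TT, jacobiTheta₂_term, ← Complex.exp_add, ← Complex.exp_add]
  congr 1
  linear_combination (-(π : ℂ) * I * τ) * hkc

lemma mu_eq (u v τ : ℂ) : mu u v τ = AA u v τ / jtheta v τ := by
  rw [mu, AA, SS, div_mul_eq_mul_div]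
  congr 3
  ext n
  rw [TT_eq, EE, nome, ← Complex.exp_int_mul, ← Complex.exp_add]
  congr 3
  ring_nf

lemma jtheta_eq (v τ : ℂ) : jtheta v τ =
    Complex.exp ((π : ℂ) * I * v + (π : ℂ) * I * τ / 4) * jacobiTheta₂ (v + τ / 2 + 1 / 2) τ := by
  rw [jtheta, jacobiTheta₂, ← tsum_mul_left]
  congr 1
  ext n
  rw [neg_one_zpow_eq, jacobiTheta₂_term, ← Complex.exp_add, ← Complex.exp_add, ← Complex.exp_add]
  congr 1
  ring

lemma tsum_TT (v τ : ℂ) : ∑' n, TT n v τ =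
    Complex.exp (-((π : ℂ) * I * v + (π : ℂ) * I * τ / 4)) * jtheta v τ := by
  rw [jtheta_eq, ← mul_assoc, ← Complex.exp_add, neg_add_cancel, Complex.exp_zero, one_mul]
  rfl

lemma exp_pi_I_one : Complex.exp ((π : ℂ) * I) = -1 := Complex.exp_pi_mul_I

lemma jtheta_add_one (v τ : ℂ) : jtheta (v + 1) τ = -jtheta v τ := by
  rw [jtheta_eq, jtheta_eq, show v + 1 + τ / 2 + 1 / 2 = (v + τ / 2 + 1 / 2) + 1 by ring,
    jacobiTheta₂_add_left, show (π : ℂ) * I * (v + 1) + π * I * τ / 4 =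
      (π * I * v + π * I * τ / 4) + π * I by ring, Complex.exp_add _ ((π : ℂ) * I), exp_pi_I_one]
  ring

lemma jtheta_add_tau (v τ : ℂ) : jtheta (v + τ) τ =
    -Complex.exp (-(2 * (π : ℂ) * I * v) - (π : ℂ) * I * τ) * jtheta v τ := by
  rw [jtheta_eq, jtheta_eq, show v + τ + τ / 2 + 1 / 2 = (v + τ / 2 + 1 / 2) + τ by ring,
    jacobiTheta₂_add_left', neg_eq_neg_one_mul (Complex.exp _)]
  rw [← exp_pi_I_one, ← mul_assoc, ← mul_assoc, ← Complex.exp_add, ← Complex.exp_add,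
    ← Complex.exp_add]
  congr 1
  rw [Complex.exp_eq_exp_iff_exists_int]
  exact ⟨-1, by push_cast; ring⟩

lemma jtheta_neg (v τ : ℂ) : jtheta (-v) τ = -jtheta v τ := by
  rw [jtheta_eq, jtheta_eq, show -v + τ / 2 + 1 / 2 = -(v + τ / 2 + 1 / 2) + 1 + τ by ring,
    jacobiTheta₂_add_left', jacobiTheta₂_add_left, jacobiTheta₂_neg_left,
    neg_eq_neg_one_mul (Complex.exp _ * _)]
  rw [← exp_pi_I_one, ← mul_assoc, ← mul_assoc, ← Complex.exp_add, ← Complex.exp_add]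
  congr 1
  rw [Complex.exp_eq_exp_iff_exists_int]
  exact ⟨-1, by push_cast; ring⟩

lemma jtheta_zero (τ : ℂ) : jtheta 0 τ = 0 := by
  have := jtheta_neg 0 τ
  rw [neg_zero] at this
  exact CharZero.eq_neg_self_iff.mp this

lemma jtheta_diff {τ : ℂ} (hτ : 0 < τ.im) : Differentiable ℂ (fun v => jtheta v τ) := by
  simp_rw [jtheta_eq]
  intro v
  apply DifferentiableAt.mul
  · fun_prop
  · exact (differentiableAt_jacobiTheta₂_fst (v + τ / 2 + 1 / 2) hτ).comp
      (f := fun v => v + τ / 2 + 1 / 2) v (by fun_prop)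

lemma jtheta_tau_add_one (v τ : ℂ) : jtheta v (τ + 1) =
    Complex.exp ((π : ℂ) * I / 4) * jtheta v τ := by
  rw [jtheta, jtheta, ← tsum_mul_left]
  congr 1
  ext n
  obtain ⟨k, hk⟩ := Int.even_mul_succ_self n
  have hkc : (n : ℂ) * (n + 1) = k + k := by exact_mod_cast hk
  rw [mul_left_comm]
  congr 1
  rw [← Complex.exp_add, Complex.exp_eq_exp_iff_exists_int]
  exact ⟨k, by linear_combination ((π : ℂ) * I) * hkc⟩

lemma nome_add_one (τ : ℂ) : nome (τ + 1) = nome τ := by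
  rw [nome, nome, Complex.exp_eq_exp_iff_exists_int]
  exact ⟨1, by push_cast; ring⟩

lemma mu_tau_add_one (u v τ : ℂ) :
    mu u v (τ + 1) = Complex.exp (-((π : ℂ) * I) / 4) * mu u v τ := by
  rw [mu, mu, nome_add_one, jtheta_tau_add_one, neg_div, Complex.exp_neg]
  field_simp

lemma EE_ne_one {u τ : ℂ} (hu : ¬ InL τ u) (n : ℤ) : 1 - EE u τ n ≠ 0 := by
  intro h
  have : EE u τ n = 1 := (sub_eq_zero.mp h).symm
  rw [EE, Complex.exp_eq_one_iff] at this
  obtain ⟨k, hk⟩ := this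
  apply hu
  refine ⟨-n, k, ?_⟩
  have h2 : 2 * (π : ℂ) * I ≠ 0 := Complex.two_pi_I_ne_zero
  apply mul_left_cancel₀ h2
  push_cast
  linear_combination hk

lemma EE_zero_ne_one {τ : ℂ} (hτ : 0 < τ.im) {n : ℤ} (hn : n ≠ 0) : 1 - EE 0 τ n ≠ 0 := by
  intro h
  have : EE 0 τ n = 1 := (sub_eq_zero.mp h).symm
  rw [EE, Complex.exp_eq_one_iff] at this
  obtain ⟨k, hk⟩ := this
  have h2 : 2 * (π : ℂ) * I ≠ 0 := Complex.two_pi_I_ne_zero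
  have h3 : (n : ℂ) * τ = k := by
    apply mul_left_cancel₀ h2
    linear_combination hk
  have := congrArg Complex.im h3
  simp at this
  rcases this with h | h
  · exact hn h
  · exact hτ.ne' h

lemma norm_EE (u τ : ℂ) (n : ℤ) : ‖EE u τ n‖ = Real.exp (-2 * π * (u.im + n * τ.im)) := by
  rw [EE, Complex.norm_exp]
  congr 1
  simp

lemma EE_far {τ : ℂ} (u : ℂ) (n : ℤ) (h : 1 ≤ |u.im + n * τ.im|) :
    1 / 2 ≤ ‖1 - EE u τ n‖ := by
  have hpi := Real.pi_gt_three
  rcases le_abs.mp h with h | h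
  · have h1 : ‖EE u τ n‖ ≤ 1 / 2 := by
      rw [norm_EE]
      have : Real.exp (-2 * π * (u.im + n * τ.im)) ≤ Real.exp (-1) := by
        apply Real.exp_le_exp.mpr
        nlinarith
      have h3 := Real.exp_neg_one_lt_half
      linarith
    have := norm_sub_norm_le (1 : ℂ) (EE u τ n)
    rw [norm_one] at this
    linarith
  · have h1 : 2 ≤ ‖EE u τ n‖ := by
      rw [norm_EE]
      have h4 : 1 ≤ -2 * π * (u.im + n * τ.im) := by nlinarith
      have := Real.add_one_le_exp (-2 * π * (u.im + n * τ.im))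
      linarith
    have := norm_sub_norm_le (EE u τ n) 1
    rw [norm_one, norm_sub_rev] at this
    linarith

lemma EE_diff (τ : ℂ) (n : ℤ) : Differentiable ℂ (fun u => EE u τ n) := by
  unfold EE; fun_prop

lemma lower_bound {τ : ℂ} (hτ : 0 < τ.im) (c : ℂ) (w : ℤ → Prop)
    (hw : ∀ n, w n → 1 - EE c τ n ≠ 0) :
    ∃ δ > 0, ∀ᶠ u in 𝓝 c, ∀ n, w n → δ ≤ ‖1 - EE u τ n‖ := by
  obtain ⟨K, hK⟩ := exists_nat_ge ((|c.im| + 2) / τ.im)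
  rw [div_le_iff₀ hτ] at hK
  have hfin : ∀ s : Finset ℤ, ∃ δ > 0, ∀ᶠ u in 𝓝 c, ∀ n ∈ s, w n → δ ≤ ‖1 - EE u τ n‖ := by
    intro s
    induction s using Finset.induction_on with
    | empty => exact ⟨1, one_pos, by simp⟩
    | insert a s _ ih =>
      obtain ⟨δ, hδ, h⟩ := ih
      by_cases ha : w a
      · have hpos : 0 < ‖1 - EE c τ a‖ := norm_pos_iff.mpr (hw a ha)
        have hc : Tendsto (fun u => ‖1 - EE u τ a‖) (𝓝 c) (𝓝 ‖1 - EE c τ a‖) := by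
          apply Continuous.tendsto
          have := (EE_diff τ a).continuous
          fun_prop
        have := hc.eventually (lt_mem_nhds (half_lt_self hpos))
        refine ⟨min δ (‖1 - EE c τ a‖ / 2), lt_min hδ (half_pos hpos), ?_⟩
        filter_upwards [h, this] with u h1 h2 n hn hwn
        rw [Finset.mem_insert] at hn
        rcases hn with rfl | hn
        · exact (min_le_right _ _).trans h2.le
        · exact (min_le_left _ _).trans (h1 n hn hwn)
      · refine ⟨δ, hδ, ?_⟩
        filter_upwards [h] with u h1 n hn hwn
        rw [Finset.mem_insert] at hn
        rcases hn with rfl | hn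
        · exact absurd hwn ha
        · exact h1 n hn hwn
  obtain ⟨δ, hδ, h⟩ := hfin (Finset.Icc (-(K : ℤ)) K)
  refine ⟨min δ (1 / 2), lt_min hδ (by norm_num), ?_⟩
  have him : ∀ᶠ u in 𝓝 c, |u.im| < |c.im| + 1 := by
    have : Tendsto (fun u : ℂ => |u.im|) (𝓝 c) (𝓝 |c.im|) := Continuous.tendsto (by fun_prop) c
    exact this.eventually (gt_mem_nhds (by linarith))
  filter_upwards [h, him] with u h1 h2 n hwn
  by_cases hn : n ∈ Finset.Icc (-(K : ℤ)) K
  · exact (min_le_left _ _).trans (h1 n hn hwn)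
  · apply (min_le_right _ _).trans
    apply EE_far
    rw [Finset.mem_Icc, not_and_or, not_le, not_le] at hn
    have h3 := abs_lt.mp h2
    rcases hn with hn | hn
    · have : (n : ℝ) < -(K : ℝ) := by exact_mod_cast hn
      rw [le_abs]; right; nlinarith
    · have : (K : ℝ) < n := by exact_mod_cast hn
      rw [le_abs]; left; nlinarith

lemma summable_TT {τ : ℂ} (hτ : 0 < τ.im) (v : ℂ) : Summable (fun n => TT n v τ) :=
  (summable_jacobiTheta₂_term_iff _ _).mpr hτ

lemma summable_w {τ : ℂ} (hτ : 0 < τ.im) {u : ℂ} (hu : ¬ InL τ u) {w : ℤ → ℂ}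
    (hw : Summable w) : Summable (fun n => w n / (1 - EE u τ n)) := by
  obtain ⟨δ, hδ, h⟩ := lower_bound hτ u (fun _ => True) (fun n _ => EE_ne_one hu n)
  have h := h.self_of_nhds
  apply Summable.of_norm_bounded (hw.norm.div_const δ)
  intro n
  rw [norm_div]
  gcongr
  exact h n trivial

lemma analytic_w {τ : ℂ} (hτ : 0 < τ.im) (c : ℂ) {w : ℤ → ℂ} (hw : Summable w)
    (hwc : ∀ n, w n ≠ 0 → 1 - EE c τ n ≠ 0) :
    AnalyticAt ℂ (fun u => ∑' n, w n / (1 - EE u τ n)) c := by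
  obtain ⟨δ, hδ, h⟩ := lower_bound hτ c (fun n => w n ≠ 0) hwc
  obtain ⟨U, hU, hUo, hcU⟩ := eventually_nhds_iff.mp h
  have : DifferentiableOn ℂ (fun u => ∑' n, w n / (1 - EE u τ n)) U := by
    apply differentiableOn_tsum_of_summable_norm (hw.norm.div_const δ) _ hUo
    · intro n u hu
      by_cases hn : w n = 0
      · simp [hn]
      · rw [norm_div]
        gcongr
        exact hU u hu n hn
    · intro n u hu
      apply DifferentiableAt.differentiableWithinAt
      by_cases hn : w n = 0
      · simp [hn]
      · have := EE_diff τ n u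
        have h0 : 1 - EE u τ n ≠ 0 := by
          have := hU u hu n hn
          exact norm_pos_iff.mp (lt_of_lt_of_le hδ this)
        fun_prop (disch := assumption)
  exact this.analyticAt (hUo.mem_nhds hcU)

lemma AA_diff_left {τ : ℂ} (hτ : 0 < τ.im) (v : ℂ) {c : ℂ} (hc : ¬ InL τ c) :
    DifferentiableAt ℂ (fun u => AA u v τ) c := by
  have := (analytic_w hτ c (summable_TT hτ v) (fun n _ => EE_ne_one hc n)).differentiableAt
  unfold AA SS
  fun_prop

lemma AA_diff_right {τ : ℂ} (hτ : 0 < τ.im) {u : ℂ} (hu : ¬ InL τ u) :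
    Differentiable ℂ (fun v => AA u v τ) := by
  intro c
  obtain ⟨δ, hδ, h⟩ := lower_bound hτ u (fun _ => True) (fun n _ => EE_ne_one hu n)
  have h := h.self_of_nhds
  set S : ℝ := |(c + τ / 2 + 1 / 2).im| + 1
  let U : Set ℂ := {v | |(v + τ / 2 + 1 / 2).im| < S}
  have hUo : IsOpen U := isOpen_lt (by fun_prop) (by fun_prop)
  have hcU : c ∈ U := lt_add_one |(c + τ / 2 + 1 / 2).im|
  have hs := (summable_pow_mul_jacobiTheta₂_term_bound S hτ 0)
  simp only [pow_zero, one_mul] at hs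
  have : DifferentiableOn ℂ (fun v => ∑' n, TT n v τ / (1 - EE u τ n)) U := by
    apply differentiableOn_tsum_of_summable_norm (hs.div_const δ) _ hUo
    · intro n v hv
      rw [norm_div]
      gcongr
      · exact norm_jacobiTheta₂_term_le hτ (le_of_lt hv) le_rfl n
      · exact h n trivial
    · intro n
      apply Differentiable.differentiableOn
      unfold TT jacobiTheta₂_term
      fun_prop
  have := this.differentiableAt (hUo.mem_nhds hcU)
  unfold AA SS
  fun_prop

lemma AA_pole {τ : ℂ} (hτ : 0 < τ.im) (v : ℂ) : ∃ g : ℂ → ℂ, AnalyticAt ℂ g 0 ∧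
    g 0 = -1 / (2 * (π : ℂ) * I) ∧ ∀ᶠ u in 𝓝[≠] (0 : ℂ), AA u v τ = g u / u := by
  set w : ℤ → ℂ := Function.update (fun n => TT n v τ) 0 0 with hwdef
  have hw : Summable w := (summable_TT hτ v).update 0 0
  have hr := analytic_w hτ 0 hw (fun n hn => by
    by_cases h0 : n = 0
    · subst h0; simp [hwdef] at hn
    · exact EE_zero_ne_one hτ h0)
  set r : ℂ → ℂ := fun u => ∑' n, w n / (1 - EE u τ n) with hrdef
  let f : ℂ → ℂ := fun u => 1 - EE u τ 0
  have hfd : Differentiable ℂ f := by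
    have := EE_diff τ 0
    fun_prop
  have hf0 : f 0 = 0 := by simp [f, EE]
  have hf' : deriv f 0 = -(2 * (π : ℂ) * I) := by
    have h1 : HasDerivAt (fun u : ℂ => 2 * (π : ℂ) * I * (u + (0 : ℤ) * τ)) (2 * (π : ℂ) * I) 0 := by
      simpa using ((hasDerivAt_id (0 : ℂ)).add_const ((0 : ℤ) * τ)).const_mul (2 * (π : ℂ) * I)
    have := (h1.cexp.const_sub 1).deriv
    simp at this
    simp only [f, EE]
    simpa using this
  have hda : AnalyticAt ℂ (dslope f 0) 0 := by
    obtain ⟨p, hp⟩ := hfd.analyticAt 0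
    exact ⟨_, hp.has_fpower_series_dslope_fslope⟩
  have hd0 : dslope f 0 0 = -(2 * (π : ℂ) * I) := by rw [dslope_same, hf']
  refine ⟨fun u => Complex.exp ((π : ℂ) * I * u) * (1 / dslope f 0 u + u * r u), ?_, ?_, ?_⟩
  · have : dslope f 0 0 ≠ 0 := by
      rw [hd0]; exact neg_ne_zero.mpr Complex.two_pi_I_ne_zero
    have he : AnalyticAt ℂ (fun u : ℂ => Complex.exp ((π : ℂ) * I * u)) 0 := by fun_prop
    exact he.mul ((analyticAt_const.div hda this).add (analyticAt_id.mul hr))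
  · simp only [hd0]
    simp [neg_div, inv_neg]
  · filter_upwards [InL_punct hτ 0, self_mem_nhdsWithin] with u hu hu0
    have hu0 : u ≠ 0 := hu0
    have hS : SS u v τ = 1 / f u + r u := by
      rw [SS, (summable_w hτ hu (summable_TT hτ v)).tsum_eq_add_tsum_ite 0]
      congr 1
      · simp [TT, jacobiTheta₂_term, f]
      · rw [hrdef]
        congr 1
        ext n
        by_cases hn : n = 0
        · simp [hn, hwdef]
        · simp [hn, hwdef]
    rw [AA, hS, dslope_of_ne _ hu0, slope_def_field, hf0]
    simp only [sub_zero]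
    have : f u ≠ 0 := EE_ne_one hu 0
    field_simp

lemma EE_add_one (u τ : ℂ) (n : ℤ) : EE (u + 1) τ n = EE u τ n := by
  rw [EE, EE, Complex.exp_eq_exp_iff_exists_int]
  exact ⟨1, by push_cast; ring⟩

lemma AA_add_one_left (u v τ : ℂ) : AA (u + 1) v τ = -AA u v τ := by
  rw [AA, AA, SS, SS, mul_add, mul_one, Complex.exp_add, exp_pi_I_one]
  simp_rw [EE_add_one]
  ring

lemma TT_add_one (n : ℤ) (v τ : ℂ) : TT n (v + 1) τ = TT n v τ := by
  rw [TT, TT, jacobiTheta₂_term, jacobiTheta₂_term, Complex.exp_eq_exp_iff_exists_int]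
  exact ⟨n, by ring⟩

lemma AA_add_one_right (u v τ : ℂ) : AA u (v + 1) τ = AA u v τ := by
  rw [AA, AA, SS, SS]
  simp_rw [TT_add_one]

lemma TT_add_tau (n : ℤ) (u v τ : ℂ) : TT n (v + τ) τ =
    Complex.exp (-(2 * (π : ℂ) * I * u)) * (TT n v τ * EE u τ n) := by
  rw [TT, TT, jacobiTheta₂_term, jacobiTheta₂_term, EE, ← Complex.exp_add, ← Complex.exp_add]
  congr 1
  ring

lemma AA_add_tau_right {τ : ℂ} (hτ : 0 < τ.im) {u : ℂ} (hu : ¬ InL τ u) (v : ℂ) :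
    AA u (v + τ) τ = Complex.exp (-(2 * (π : ℂ) * I * u)) * AA u v τ -
      Complex.exp (-((π : ℂ) * I * u) - (π : ℂ) * I * v - (π : ℂ) * I * τ / 4) * jtheta v τ := by
  have h1 : SS u (v + τ) τ = Complex.exp (-(2 * (π : ℂ) * I * u)) *
      (SS u v τ - ∑' n, TT n v τ) := by
    rw [SS, SS, ← (summable_w hτ hu (summable_TT hτ v)).tsum_sub (summable_TT hτ v), ← tsum_mul_left]
    congr 1
    ext n
    rw [TT_add_tau n u]
    have := EE_ne_one hu n
    field_simp
    ring
  rw [AA, AA, h1, tsum_TT, mul_sub, mul_sub]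
  congr 1
  · ring
  · rw [← mul_assoc, ← mul_assoc, ← Complex.exp_add, ← Complex.exp_add]
    congr 2
    ring

lemma TT_sub_one (n : ℤ) (v τ : ℂ) : TT (n - 1) v τ =
    -(Complex.exp (-(2 * (π : ℂ) * I * v)) * Complex.exp (-(2 * (π : ℂ) * I * (n * τ)))) *
      TT n v τ := by
  rw [neg_eq_neg_one_mul, ← exp_pi_I_one, TT, TT, jacobiTheta₂_term, jacobiTheta₂_term,
    ← Complex.exp_add, ← Complex.exp_add, ← Complex.exp_add, Complex.exp_eq_exp_iff_exists_int]
  exact ⟨-1, by push_cast; ring⟩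

lemma AA_add_tau_left {τ : ℂ} (hτ : 0 < τ.im) {u : ℂ} (hu : ¬ InL τ u) (v : ℂ) :
    AA (u + τ) v τ =
      -Complex.exp (2 * (π : ℂ) * I * u - 2 * (π : ℂ) * I * v + (π : ℂ) * I * τ) * AA u v τ +
      Complex.exp ((π : ℂ) * I * u - (π : ℂ) * I * v + 3 * (π : ℂ) * I * τ / 4) * jtheta v τ := by
  have hs1 : Summable (fun n : ℤ => TT (n - 1) v τ) :=
    (Equiv.subRight (1 : ℤ)).summable_iff.mpr (summable_TT hτ v)
  have e1 : ∑' n : ℤ, TT (n - 1) v τ = ∑' n, TT n v τ :=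
    (Equiv.subRight (1 : ℤ)).tsum_eq (fun n => TT n v τ)
  have h1 : SS (u + τ) v τ = -Complex.exp (2 * (π : ℂ) * I * u - 2 * (π : ℂ) * I * v) * SS u v τ
      + ∑' n, TT n v τ := by
    rw [← e1, SS, SS, ← tsum_mul_left,
      ← ((summable_w hτ hu (summable_TT hτ v)).mul_left _).tsum_add hs1,
      ← (Equiv.subRight (1 : ℤ)).tsum_eq]
    congr 1
    ext n
    have e2 : EE (u + τ) τ (n - 1) = EE u τ n := by
      rw [EE, EE]; congr 1; push_cast; ring
    have e3 : Complex.exp (2 * (π : ℂ) * I * u - 2 * (π : ℂ) * I * v) =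
       EE u τ n * (Complex.exp (-(2 * (π : ℂ) * I * v)) *
        Complex.exp (-(2 * (π : ℂ) * I * (n * τ)))) := by
      rw [EE, ← Complex.exp_add, ← Complex.exp_add]; congr 1; ring
    have := EE_ne_one hu n
    simp only [Equiv.subRight_apply]
    rw [e2, e3, TT_sub_one]
    field_simp
    ring
  rw [AA, AA, h1, tsum_TT, mul_add]
  congr 1
  · rw [show 2 * (π : ℂ) * I * u - 2 * (π : ℂ) * I * v + (π : ℂ) * I * τ =
      (2 * (π : ℂ) * I * u - 2 * (π : ℂ) * I * v) + (π : ℂ) * I * τ by ring,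
      Complex.exp_add _ ((π : ℂ) * I * τ), mul_add, Complex.exp_add]
    ring
  · rw [← mul_assoc, ← Complex.exp_add]
    congr 2
    ring

lemma zero_of_mult {τ : ℂ} (hτ : 0 < τ.im) {u : ℂ} (hu : ¬ InL τ u) (F : ℂ → ℂ)
    (hd : ∀ c, ¬ InL τ c → DifferentiableAt ℂ F c) (g : ℂ → ℂ) (hg : AnalyticAt ℂ g 0)
    (hg0 : g 0 = 0) (hFg : ∀ᶠ u in 𝓝[≠] (0 : ℂ), F u = g u / u)
    (h1 : ∀ v, ¬ InL τ v → F (v + 1) = F v)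
    (h2 : ∀ v, ¬ InL τ v → F (v + τ) = Complex.exp (-(2 * (π : ℂ) * I * u)) * F v)
    (v : ℂ) (hv : ¬ InL τ v) : F v = 0 := by
  set y : ℝ := 2 * π * u.im / τ.im with hy
  have hyt : y * τ.im = 2 * π * u.im := by rw [hy]; field_simp
  set α : ℂ := Complex.exp (I * y) with hα
  set β : ℂ := Complex.exp (I * y * τ - 2 * (π : ℂ) * I * u) with hβ
  have hα1 : ‖α‖ = 1 := by rw [hα, mul_comm]; exact Complex.norm_exp_ofReal_mul_I y
  have hβ1 : ‖β‖ = 1 := by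
    rw [hβ, Complex.norm_exp, Real.exp_eq_one_iff]
    simp
    linarith
  have k1 : ∀ v, ¬ InL τ v → Complex.exp (I * y * (v + 1)) * F (v + 1) =
      α * (Complex.exp (I * y * v) * F v) := by
    intro v hv
    rw [h1 v hv, ← mul_assoc, hα, ← Complex.exp_add]
    congr 2; ring
  have k2 : ∀ v, ¬ InL τ v → Complex.exp (I * y * (v + τ)) * F (v + τ) =
      β * (Complex.exp (I * y * v) * F v) := by
    intro v hv
    rw [h2 v hv, ← mul_assoc, ← mul_assoc, hβ, ← Complex.exp_add, ← Complex.exp_add]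
    congr 2; ring
  obtain ⟨K, hK⟩ := const_of_periods hτ (fun v => Complex.exp (I * y * v) * F v)
    (by
      intro c hc
      have := hd c hc
      fun_prop)
    (fun v => Complex.exp (I * y * v) * g v)
    (by
      have : AnalyticAt ℂ (fun v : ℂ => Complex.exp (I * y * v)) 0 := by fun_prop
      exact this.mul hg)
    (by simp [hg0])
    (by
      filter_upwards [hFg] with v hv
      rw [hv]; ring) α β hα1 hβ1 k1 k2
  have hK0 : K = 0 := by
    by_contra hne
    have hv1 : ¬ InL τ (v + 1) := by rwa [InL_add (InL_one τ)]
    have hv2 : ¬ InL τ (v + τ) := by rwa [InL_add (InL_tau τ)]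
    have e1 := k1 v hv
    have e2 := k2 v hv
    have a0 := hK v hv
    have a1 := hK _ hv1
    have a2 := hK _ hv2
    rw [a0, a1] at e1
    rw [a0, a2] at e2
    have e1 : α = 1 := by
      apply mul_right_cancel₀ hne; rw [← e1, one_mul]
    have e2 : β = 1 := by
      apply mul_right_cancel₀ hne; rw [← e2, one_mul]
    rw [hα, Complex.exp_eq_one_iff] at e1
    rw [hβ, Complex.exp_eq_one_iff] at e2
    obtain ⟨k, hk⟩ := e1
    obtain ⟨m, hm⟩ := e2
    apply hu
    refine ⟨k, -m, ?_⟩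
    apply mul_left_cancel₀ Complex.two_pi_I_ne_zero
    push_cast
    linear_combination τ * hk - hm
  have := hK v hv
  rw [hK0] at this
  exact (mul_eq_zero.mp this).resolve_left (Complex.exp_ne_zero _)

lemma AA_ne_zero_near {τ : ℂ} (hτ : 0 < τ.im) (v : ℂ) :
    ∀ᶠ u in 𝓝[≠] (0 : ℂ), AA u v τ ≠ 0 := by
  obtain ⟨g, hg, hg0, h⟩ := AA_pole hτ v
  have hne : g 0 ≠ 0 := by
    rw [hg0]
    exact div_ne_zero (by norm_num) Complex.two_pi_I_ne_zero
  have := (hg.continuousAt.eventually_ne hne).filter_mono (nhdsWithin_le_nhds (s := {0}ᶜ))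
  filter_upwards [h, this, self_mem_nhdsWithin] with u h1 h2 h3
  rw [h1]
  exact div_ne_zero h2 h3

lemma jtheta_not_id_zero {τ : ℂ} (hτ : 0 < τ.im) : ∃ v, jtheta v τ ≠ 0 := by
  by_contra! hz
  obtain ⟨v, hv⟩ := (InL_punct hτ 0).exists
  have key : ∀ u, ¬ InL τ u → AA u v τ = 0 := by
    intro u hu
    apply zero_of_mult hτ hu (fun v => AA u v τ) (fun c _ => AA_diff_right hτ hu c)
      (fun v => v * AA u v τ) _ (by simp) _ _ _ v hv
    · exact analyticAt_id.mul ((AA_diff_right hτ hu).analyticAt 0)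
    · filter_upwards [self_mem_nhdsWithin] with w hw
      have hw : w ≠ 0 := hw
      field_simp
    · intro w _; exact AA_add_one_right u w τ
    · intro w _
      show AA u (w + τ) τ = _ * AA u w τ
      rw [AA_add_tau_right hτ hu, hz, mul_zero, sub_zero]
  obtain ⟨u, h1, h2⟩ := ((AA_ne_zero_near hτ v).and (InL_punct hτ 0)).exists
  exact h1 (key u h2)

lemma jtheta_ne_zero {τ : ℂ} (hτ : 0 < τ.im) {v : ℂ} (hv : ¬ InL τ v) : jtheta v τ ≠ 0 := by
  intro h0
  obtain ⟨g, hg, hg0, h⟩ := AA_pole hτ v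
  have hth := jtheta_diff hτ
  have hth' : Differentiable ℂ (fun u => jtheta (u - v) τ) :=
    hth.comp (f := fun u => u - v) (by fun_prop)
  obtain ⟨K, hK⟩ := const_of_periods hτ (fun u => AA u v τ * jtheta (u - v) τ)
    (fun c hc => (AA_diff_left hτ v hc).mul (hth' c))
    (fun u => g u * jtheta (u - v) τ) (hg.mul (hth'.analyticAt 0))
    (by simp [jtheta_neg, h0])
    (by filter_upwards [h] with u hu; rw [hu]; ring) 1 1 (by simp) (by simp)
    (by
      intro u _
      rw [AA_add_one_left, show u + 1 - v = (u - v) + 1 by ring, jtheta_add_one]; ring)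
    (by
      intro u hu
      rw [AA_add_tau_left hτ hu, show u + τ - v = (u - v) + τ by ring, jtheta_add_tau, h0,
        mul_zero, add_zero]
      have : Complex.exp (2 * (π : ℂ) * I * u - 2 * (π : ℂ) * I * v + (π : ℂ) * I * τ) *
        Complex.exp (-(2 * (π : ℂ) * I * (u - v)) - (π : ℂ) * I * τ) = 1 := by
        rw [← Complex.exp_add, Complex.exp_eq_one_iff]
        exact ⟨0, by push_cast; ring⟩
      linear_combination (AA u v τ * jtheta (u - v) τ) * this)
  have hK0 : K = 0 := by
    rw [← hK v hv]
    simp [jtheta_zero]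
  have hz : ∀ᶠ u in 𝓝[≠] (0 : ℂ), jtheta (u - v) τ = 0 := by
    filter_upwards [AA_ne_zero_near hτ v, InL_punct hτ 0] with u h1 h2
    have := hK u h2
    rw [hK0] at this
    exact (mul_eq_zero.mp this).resolve_left h1
  obtain ⟨w, hw⟩ := jtheta_not_id_zero hτ
  apply hw
  have han : AnalyticOnNhd ℂ (fun u => jtheta (u - v) τ) univ := fun u _ => hth'.analyticAt u
  have := han.eqOn_zero_of_preconnected_of_frequently_eq_zero isPreconnected_univ (mem_univ 0)
    hz.frequently (mem_univ (w + v))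
  simpa using this

lemma AA_symm {τ : ℂ} (hτ : 0 < τ.im) {u v : ℂ} (hu : ¬ InL τ u) (hv : ¬ InL τ v) :
    AA u v τ * jtheta u τ = AA v u τ * jtheta v τ := by
  obtain ⟨g, hg, hg0, h⟩ := AA_pole hτ u
  have hth := jtheta_diff hτ
  have hA := AA_diff_right hτ hu
  have := zero_of_mult hτ hu (fun v => AA u v τ * jtheta u τ - AA v u τ * jtheta v τ)
    (fun c hc => ((hA c).mul_const _).sub ((AA_diff_left hτ u hc).mul (hth c)))
    (fun v => v * AA u v τ * jtheta u τ - g v * jtheta v τ)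
    (((analyticAt_id.mul (hA.analyticAt 0)).mul analyticAt_const).sub
      (hg.mul (hth.analyticAt 0)))
    (by simp [jtheta_zero])
    (by
      filter_upwards [h, self_mem_nhdsWithin] with w hw hw0
      have hw0 : w ≠ 0 := hw0
      rw [hw]; field_simp)
    (by
      intro w _
      rw [AA_add_one_right, AA_add_one_left, jtheta_add_one]; ring)
    (by
      intro w hw
      rw [AA_add_tau_right hτ hu, AA_add_tau_left hτ hw, jtheta_add_tau]
      have e1 : Complex.exp (2 * (π : ℂ) * I * w - 2 * (π : ℂ) * I * u + (π : ℂ) * I * τ) *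
        Complex.exp (-(2 * (π : ℂ) * I * w) - (π : ℂ) * I * τ) =
          Complex.exp (-(2 * (π : ℂ) * I * u)) := by
        rw [← Complex.exp_add]; congr 1; ring
      have e2 : Complex.exp ((π : ℂ) * I * w - (π : ℂ) * I * u + 3 * (π : ℂ) * I * τ / 4) *
        Complex.exp (-(2 * (π : ℂ) * I * w) - (π : ℂ) * I * τ) =
          Complex.exp (-((π : ℂ) * I * u) - (π : ℂ) * I * w - (π : ℂ) * I * τ / 4) := by
        rw [← Complex.exp_add]; congr 1; ring
      linear_combination (-AA w u τ * jtheta w τ) * e1 + (jtheta u τ * jtheta w τ) * e2)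
    v hv
  exact sub_eq_zero.mp this

lemma mu_symm {τ : ℂ} (hτ : 0 < τ.im) {u v : ℂ} (hu : ¬ InL τ u) (hv : ¬ InL τ v) :
    mu u v τ = mu v u τ := by
  rw [mu_eq, mu_eq, div_eq_div_iff (jtheta_ne_zero hτ hv) (jtheta_ne_zero hτ hu)]
  exact AA_symm hτ hu hv

lemma mu_add_one (u v τ : ℂ) : mu (u + 1) v τ = -mu u v τ := by
  rw [mu_eq, mu_eq, AA_add_one_left, neg_div]

lemma mu_add_tau {τ : ℂ} (hτ : 0 < τ.im) {u v : ℂ} (hu : ¬ InL τ u) (hv : ¬ InL τ v) :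
    mu (u + τ) v τ =
      -Complex.exp (2 * (π : ℂ) * I * (u - v) + (π : ℂ) * I * τ) * mu u v τ +
      Complex.exp ((π : ℂ) * I * (u - v) + 3 * (π : ℂ) * I * τ / 4) := by
  have := jtheta_ne_zero hτ hv
  rw [mu_eq, mu_eq, AA_add_tau_left hτ hu, ← mul_sub, ← mul_sub]
  field_simp

lemma mu_three {τ : ℂ} (hτ : 0 < τ.im) {u v : ℂ} (hu : ¬ InL τ u) (hv : ¬ InL τ v) :
    Complex.exp (-(2 * (π : ℂ) * I * u)) * Complex.exp (2 * (π : ℂ) * I * v) *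
        Complex.exp (-((π : ℂ) * I * τ)) * mu (u + τ) v τ =
      -mu u v τ +
        Complex.exp (-((π : ℂ) * I * u)) * Complex.exp ((π : ℂ) * I * v) *
          Complex.exp (-((π : ℂ) * I * τ) / 4) := by
  rw [mu_add_tau hτ hu hv, ← Complex.exp_add, ← Complex.exp_add, ← Complex.exp_add,
    ← Complex.exp_add, mul_add, ← mul_assoc, mul_neg, ← Complex.exp_add, ← Complex.exp_add]
  congr 1
  · rw [show -(2 * (π : ℂ) * I * u) + 2 * π * I * v + -(π * I * τ) +
      (2 * π * I * (u - v) + π * I * τ) = 0 by ring, Complex.exp_zero]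
    ring
  · congr 1; ring

open MeasureTheory

lemma gauss_re {τ : ℂ} (hτ : 0 < τ.im) : ((π : ℂ) * I * τ).re < 0 := by
  simp
  positivity

lemma norm_cosh_real (x : ℝ) : ‖Complex.cosh ((π : ℂ) * (x : ℂ))‖ = Real.cosh (π * x) := by
  rw [← Complex.ofReal_mul, ← Complex.ofReal_cosh, Complex.norm_real, Real.norm_eq_abs,
    abs_of_pos (Real.cosh_pos _)]

lemma cosh_real_ne (x : ℝ) : Complex.cosh ((π : ℂ) * (x : ℂ)) ≠ 0 := by
  rw [← norm_pos_iff, norm_cosh_real]; exact Real.cosh_pos _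

lemma mordell_integrable {τ : ℂ} (hτ : 0 < τ.im) (z : ℂ) : Integrable (fun x : ℝ =>
    Complex.exp ((π : ℂ) * I * (x : ℂ) ^ 2 * τ - 2 * (π : ℂ) * (x : ℂ) * z) /
    Complex.cosh ((π : ℂ) * (x : ℂ))) := by
  have h := integrable_cexp_quadratic' (gauss_re hτ) (-2 * π * z) 0
  apply h.mono
  · apply Continuous.aestronglyMeasurable
    apply Continuous.div
    · fun_prop
    · have := Complex.continuous_cosh
      fun_prop
    · exact cosh_real_ne
  · filter_upwards with x
    rw [norm_div, norm_cosh_real]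
    apply (div_le_self (norm_nonneg _) (Real.one_le_cosh _)).trans
    apply le_of_eq
    congr 2
    ring

lemma mordell_add_one {τ : ℂ} (hτ : 0 < τ.im) (z : ℂ) :
    mordell z τ + mordell (z + 1) τ =
      2 * ((τ / I) ^ (-(1 / 2 : ℂ)) * Complex.exp ((π : ℂ) * I * (z + 1 / 2) ^ 2 / τ)) := by
  have hτ0 : τ ≠ 0 := by rintro rfl; simp at hτ
  rw [mordell, mordell, ← integral_add (mordell_integrable hτ z) (mordell_integrable hτ _)]
  have h := integral_cexp_quadratic (gauss_re hτ) (-2 * π * z - π) 0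
  have e1 : (π / -((π : ℂ) * I * τ)) ^ (1 / 2 : ℂ) = (τ / I) ^ (-(1 / 2 : ℂ)) := by
    rw [Complex.cpow_neg, ← Complex.inv_cpow]
    · congr 1
      have : (π : ℂ) ≠ 0 := by exact_mod_cast Real.pi_ne_zero
      have := Complex.I_ne_zero
      field_simp
      simp
    · rw [Ne, Complex.arg_eq_pi_iff, not_and_or, not_lt]
      left
      simp [Complex.div_I]
      exact hτ.le
  have e2 : (0 : ℂ) - (-2 * π * z - π) ^ 2 / (4 * ((π : ℂ) * I * τ)) =
      (π : ℂ) * I * (z + 1 / 2) ^ 2 / τ := by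
    have : (π : ℂ) ≠ 0 := by exact_mod_cast Real.pi_ne_zero
    have := Complex.I_ne_zero
    field_simp
    rw [Complex.I_sq]
    ring
  rw [e1, e2] at h
  rw [← h, ← integral_const_mul]
  congr 1
  ext x
  have hc := cosh_real_ne x
  rw [← add_div, div_eq_iff hc, Complex.cosh]
  have : ∀ A B C : ℂ, 2 * A * ((B + C) / 2) = A * B + A * C := by intros; ring
  rw [this, ← Complex.exp_add, ← Complex.exp_add]
  congr 2 <;> ring

lemma mordell_diff {τ : ℂ} (hτ : 0 < τ.im) : Differentiable ℂ (fun z => mordell z τ) := by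
  intro z₀
  set A : ℝ := 2 * π * (|z₀.re| + 1) + 1 with hA
  have hpi := Real.pi_pos
  have hi : ∀ s : ℝ, Integrable (fun x : ℝ => Real.exp (-π * τ.im * x ^ 2 + s * x)) := by
    intro s
    have := (integrable_cexp_quadratic' (gauss_re hτ) s 0).norm
    refine this.congr ?_
    filter_upwards with x
    rw [Complex.norm_exp]
    congr 1
    simp [← Complex.ofReal_pow]
  have hcont := Complex.continuous_cosh
  have := hasDerivAt_integral_of_dominated_loc_of_deriv_le (𝕜 := ℂ) (μ := volume) (x₀ := z₀)
    (s := Metric.ball z₀ 1)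
    (F := fun (z : ℂ) (x : ℝ) =>
      Complex.exp ((π : ℂ) * I * (x : ℂ) ^ 2 * τ - 2 * (π : ℂ) * (x : ℂ) * z) /
        Complex.cosh ((π : ℂ) * (x : ℂ)))
    (F' := fun (z : ℂ) (x : ℝ) =>
      Complex.exp ((π : ℂ) * I * (x : ℂ) ^ 2 * τ - 2 * (π : ℂ) * (x : ℂ) * z) *
        (-(2 * (π : ℂ) * (x : ℂ))) / Complex.cosh ((π : ℂ) * (x : ℂ)))
    (bound := fun x => 2 * π * (Real.exp (-π * τ.im * x ^ 2 + A * x) +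
      Real.exp (-π * τ.im * x ^ 2 + (-A) * x)))
    (Metric.ball_mem_nhds _ one_pos)
    (Eventually.of_forall fun z => (mordell_integrable hτ z).aestronglyMeasurable)
    (mordell_integrable hτ z₀)
    (by
      apply Continuous.aestronglyMeasurable
      apply Continuous.div
      · fun_prop
      · fun_prop
      · exact cosh_real_ne)
    (by
      filter_upwards with x z hz
      rw [norm_div, norm_cosh_real]
      apply (div_le_self (norm_nonneg _) (Real.one_le_cosh _)).trans
      rw [norm_mul, Complex.norm_exp]
      have hre : |z.re| ≤ |z₀.re| + 1 := by
        have h1 := Complex.abs_re_le_norm (z - z₀)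
        rw [Metric.mem_ball, dist_eq_norm] at hz
        have h2 : |z.re| ≤ |z₀.re| + |(z - z₀).re| := by
          have := abs_add_le z₀.re (z - z₀).re
          simpa using this
        linarith
      have e1 : ((π : ℂ) * I * (x : ℂ) ^ 2 * τ - 2 * (π : ℂ) * (x : ℂ) * z).re =
          -π * τ.im * x ^ 2 - 2 * π * x * z.re := by
        simp [← Complex.ofReal_pow]
        ring
      have e2 : ‖-(2 * (π : ℂ) * (x : ℂ))‖ = 2 * π * |x| := by
        simp [abs_of_pos hpi]
      rw [e1, e2]
      have h3 : |x| ≤ Real.exp |x| := by linarith [Real.add_one_le_exp |x|]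
      have h4 : Real.exp (-π * τ.im * x ^ 2 - 2 * π * x * z.re) * Real.exp |x| ≤
          Real.exp (-π * τ.im * x ^ 2 + A * |x|) := by
        rw [← Real.exp_add]
        apply Real.exp_le_exp.mpr
        have h5 : -(x * z.re) ≤ |x| * (|z₀.re| + 1) := by
          calc -(x * z.re) ≤ |x * z.re| := neg_le_abs _
            _ = |x| * |z.re| := abs_mul _ _
            _ ≤ _ := by gcongr
        have h6 := mul_le_mul_of_nonneg_left h5 (by positivity : 0 ≤ 2 * π)
        rw [hA]
        linarith
      have h7 : Real.exp (-π * τ.im * x ^ 2 + A * |x|) ≤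
          Real.exp (-π * τ.im * x ^ 2 + A * x) + Real.exp (-π * τ.im * x ^ 2 + (-A) * x) := by
        rcases abs_choice x with h | h
        · rw [h]; linarith [Real.exp_pos (-π * τ.im * x ^ 2 + (-A) * x)]
        · rw [h, show A * -x = -A * x by ring]
          linarith [Real.exp_pos (-π * τ.im * x ^ 2 + A * x)]
      calc Real.exp (-π * τ.im * x ^ 2 - 2 * π * x * z.re) * (2 * π * |x|)
          ≤ Real.exp (-π * τ.im * x ^ 2 - 2 * π * x * z.re) * (2 * π * Real.exp |x|) := by gcongr
        _ = 2 * π * (Real.exp (-π * τ.im * x ^ 2 - 2 * π * x * z.re) * Real.exp |x|) := by ring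
        _ ≤ _ := by
          apply mul_le_mul_of_nonneg_left (h4.trans h7) (by positivity))
    (((hi A).add (hi (-A))).const_mul _)
    (by
      filter_upwards with x z _
      apply HasDerivAt.div_const
      apply HasDerivAt.cexp
      have := ((hasDerivAt_id z).const_mul (2 * (π : ℂ) * (x : ℂ))).const_sub
        ((π : ℂ) * I * (x : ℂ) ^ 2 * τ)
      simpa using this)
  exact this.2.differentiableAt

lemma sech_integrable : Integrable (fun x : ℝ => 1 / Real.cosh (π * x)) := by
  apply (integrable_inv_one_add_sq.const_mul 2).mono
  · apply Continuous.aestronglyMeasurable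
    apply Continuous.div (by fun_prop)
    · have := Real.continuous_cosh; fun_prop
    · intro x; exact (Real.cosh_pos _).ne'
  · filter_upwards with x
    have hx : (1 + x ^ 2) / 2 ≤ Real.cosh (π * x) := by
      rw [← Real.cosh_abs, Real.cosh_eq]
      have h1 := Real.quadratic_le_exp_of_nonneg (abs_nonneg (π * x))
      have h2 := Real.exp_pos (-|π * x|)
      rw [sq_abs] at h1
      have h3 : x ^ 2 ≤ (π * x) ^ 2 / 2 := by
        rw [mul_pow]
        nlinarith [Real.pi_gt_three, sq_nonneg x, mul_nonneg (sq_nonneg x)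
          (by nlinarith [Real.pi_gt_three] : 0 ≤ π ^ 2 - 2)]
      have := abs_nonneg (π * x)
      linarith
    rw [Real.norm_of_nonneg (by positivity), Real.norm_of_nonneg (by positivity)]
    rw [div_le_iff₀ (Real.cosh_pos _)]
    have h0 : 0 < 1 + x ^ 2 := by positivity
    calc (1 : ℝ) = 2 * (1 + x ^ 2)⁻¹ * ((1 + x ^ 2) / 2) := by field_simp
      _ ≤ _ := by gcongr

lemma sech_integral : ∫ x : ℝ, 1 / Real.cosh (π * x) = 1 := by
  have hpi := Real.pi_pos
  have htop : Tendsto (fun x : ℝ => Real.sinh (π * x)) atTop atTop := by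
    apply tendsto_atTop_mono' atTop _ (tendsto_id.const_mul_atTop hpi)
    filter_upwards [eventually_ge_atTop 0] with x hx
    exact Real.self_le_sinh_iff.mpr (by simp only [id]; positivity)
  have hbot : Tendsto (fun x : ℝ => Real.sinh (π * x)) atBot atBot := by
    apply tendsto_atBot_mono' atBot _ (tendsto_id.const_mul_atBot hpi)
    filter_upwards [eventually_le_atBot 0] with x hx
    exact Real.sinh_le_self_iff.mpr (mul_nonpos_of_nonneg_of_nonpos hpi.le hx)
  have h1 : Tendsto (fun x : ℝ => Real.arctan (Real.sinh (π * x)) / π) atTop (𝓝 (π / 2 / π)) :=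
    ((Real.tendsto_arctan_atTop.mono_right nhdsWithin_le_nhds).comp htop).div_const π
  have h2 : Tendsto (fun x : ℝ => Real.arctan (Real.sinh (π * x)) / π) atBot (𝓝 (-(π / 2) / π)) :=
    ((Real.tendsto_arctan_atBot.mono_right nhdsWithin_le_nhds).comp hbot).div_const π
  rw [integral_of_hasDerivAt_of_tendsto (f := fun x : ℝ => Real.arctan (Real.sinh (π * x)) / π)
    (fun x => ?_) sech_integrable h2 h1]
  · field_simp; norm_num
  · have h3 : HasDerivAt (fun x : ℝ => π * x) π x := by
      simpa using (hasDerivAt_id x).const_mul π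
    have h4 := (h3.sinh.arctan).div_const π
    have := Real.cosh_pos (π * x)
    have e := Real.cosh_sq (π * x)
    rw [add_comm] at e
    refine h4.congr_deriv ?_
    rw [← e]
    field_simp

lemma norm_cosh_sq (a b : ℝ) : ‖Complex.cosh (a + b * I)‖ ^ 2 = Real.sinh a ^ 2 + Real.cos b ^ 2 := by
  rw [Complex.cosh_add, Complex.cosh_mul_I, Complex.sinh_mul_I, ← Complex.normSq_eq_norm_sq,
    Complex.normSq_apply, ← Complex.ofReal_cosh, ← Complex.ofReal_sinh, ← Complex.ofReal_cos,
    ← Complex.ofReal_sin]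
  simp only [Complex.add_re, Complex.mul_re, Complex.add_im, Complex.mul_im, Complex.ofReal_re,
    Complex.ofReal_im, Complex.I_re, Complex.I_im]
  have e1 := Real.cosh_sq a
  have e2 := Real.sin_sq_add_cos_sq b
  linear_combination Real.cos b ^ 2 * e1 + Real.sinh a ^ 2 * e2

lemma norm_cosh_ge (a b : ℝ) : |Real.sinh a| ≤ ‖Complex.cosh (a + b * I)‖ := by
  apply abs_le_of_sq_le_sq' _ (norm_nonneg _) |> abs_le.mpr
  rw [norm_cosh_sq]
  linarith [sq_nonneg (Real.cos b)]

lemma cosh_ne_strip {x : ℂ} (h0 : 0 ≤ x.im) (h1 : x.im ≤ 1) (hx : x ≠ I / 2) :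
    Complex.cosh ((π : ℂ) * x) ≠ 0 := by
  intro h
  have hpi := Real.pi_pos
  have e := norm_cosh_sq (π * x.re) (π * x.im)
  have ex : ((π * x.re : ℝ) : ℂ) + ((π * x.im : ℝ) : ℂ) * I = π * x := by
    conv_rhs => rw [← Complex.re_add_im x]
    push_cast; ring
  rw [ex, h, norm_zero] at e
  have hs : Real.sinh (π * x.re) = 0 := by nlinarith [sq_nonneg (Real.sinh (π * x.re)), sq_nonneg (Real.cos (π * x.im))]
  have hc : Real.cos (π * x.im) = 0 := by nlinarith [sq_nonneg (Real.sinh (π * x.re)), sq_nonneg (Real.cos (π * x.im))]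
  rw [Real.sinh_eq_zero] at hs
  have hre : x.re = 0 := (mul_eq_zero.mp hs).resolve_left hpi.ne'
  rw [← Real.cos_pi_div_two] at hc
  have := Real.injOn_cos ⟨by positivity, by nlinarith⟩ ⟨by positivity, by linarith⟩ hc
  have him : x.im = 1 / 2 := by
    field_simp at this; linarith
  apply hx
  apply Complex.ext
  · simp [hre]
  · simp [him]


lemma G_bound {τ : ℂ} (hτ : 0 < τ.im) (z : ℂ) : ∃ M : ℝ, ∀ x y : ℝ, 0 ≤ y → y ≤ 1 →
    ‖Complex.exp ((π : ℂ) * I * ((x : ℂ) + y * I) ^ 2 * τ - 2 * (π : ℂ) * ((x : ℂ) + y * I) * z)‖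
      ≤ M := by
  have hpi := Real.pi_pos
  set a := π * τ.im with ha
  have hapos : 0 < a := by positivity
  set B := 2 * π * (|τ.re| + |z.re|) with hB
  set C := π * τ.im + 2 * π * |z.im| with hC
  refine ⟨Real.exp (B ^ 2 / (4 * a) + C), fun x y h0 h1 => ?_⟩
  rw [Complex.norm_exp]
  apply Real.exp_le_exp.mpr
  have e : ((π : ℂ) * I * ((x : ℂ) + y * I) ^ 2 * τ - 2 * (π : ℂ) * ((x : ℂ) + y * I) * z).re
      = -a * x ^ 2 + a * y ^ 2 - 2 * π * (x * y * τ.re) - 2 * π * (x * z.re) + 2 * π * (y * z.im) := by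
    simp [pow_two]
    ring
  rw [e]
  have b1 : -(x * y * τ.re) ≤ |x| * |τ.re| := by
    calc -(x * y * τ.re) ≤ |x * y * τ.re| := neg_le_abs _
      _ = |x| * |τ.re| * y := by rw [abs_mul, abs_mul, abs_of_nonneg h0]; ring
      _ ≤ |x| * |τ.re| * 1 := by gcongr
      _ = _ := by ring
  have b2 : -(x * z.re) ≤ |x| * |z.re| := by
    rw [← abs_mul]; exact neg_le_abs _
  have b3 : y * z.im ≤ |z.im| := by
    calc y * z.im ≤ |y * z.im| := le_abs_self _
      _ = y * |z.im| := by rw [abs_mul, abs_of_nonneg h0]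
      _ ≤ 1 * |z.im| := by gcongr
      _ = _ := by ring
  have b4 : a * y ^ 2 ≤ a := by
    have : y ^ 2 ≤ 1 := by nlinarith
    nlinarith
  have b5 : -a * x ^ 2 + B * |x| ≤ B ^ 2 / (4 * a) := by
    rw [le_div_iff₀ (by positivity), ← sq_abs x]
    nlinarith [sq_nonneg (2 * a * |x| - B)]
  have c1 := mul_le_mul_of_nonneg_left b1 (by positivity : 0 ≤ 2 * π)
  have c2 := mul_le_mul_of_nonneg_left b2 (by positivity : 0 ≤ 2 * π)
  have c3 := mul_le_mul_of_nonneg_left b3 (by positivity : 0 ≤ 2 * π)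
  have : B * |x| = 2 * π * (|x| * |τ.re|) + 2 * π * (|x| * |z.re|) := by rw [hB]; ring
  linarith

lemma mordell_add_tau {τ : ℂ} (hτ : 0 < τ.im) (z : ℂ) :
    mordell z τ + Complex.exp (-(2 * π * I * z) - π * I * τ) * mordell (z + τ) τ =
      2 * Complex.exp (-(π * I * z) - π * I * τ / 4) := by
  have hpi := Real.pi_pos
  set G : ℂ → ℂ := fun x => Complex.exp ((π : ℂ) * I * x ^ 2 * τ - 2 * (π : ℂ) * x * z) with hG
  set D : ℂ → ℂ := fun x => Complex.cosh ((π : ℂ) * x) with hD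
  set G0 := Complex.exp (-(π * I * z) - π * I * τ / 4) with hG0
  have hGI : G (I / 2) = G0 := by
    simp only [hG, hG0]
    congr 1
    have := Complex.I_sq
    linear_combination (π * I * τ / 4) * this
  have hDI : D (I / 2) = 0 := by
    simp only [hD]
    rw [show (π : ℂ) * (I / 2) = (π / 2 : ℂ) * I by ring, Complex.cosh_mul_I]
    exact Complex.cos_pi_div_two
  have hGd : Differentiable ℂ G := by intro x; simp only [hG]; fun_prop
  have hDd : ∀ x, HasDerivAt D (Complex.sinh (π * x) * π) x := by
    intro x
    have : HasDerivAt (fun x : ℂ => (π : ℂ) * x) π x := by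
      simpa using (hasDerivAt_id x).const_mul (π : ℂ)
    exact this.ccosh
  set K : ℂ → ℂ := fun x => dslope G (I / 2) x / dslope D (I / 2) x with hK
  have hKeq : ∀ x, x ≠ I / 2 → K x = (G x - G0) / D x := by
    intro x hx
    simp only [hK]
    rw [dslope_of_ne _ hx, dslope_of_ne _ hx, slope_def_field, slope_def_field, hGI, hDI, sub_zero]
    have : x - I / 2 ≠ 0 := sub_ne_zero.mpr hx
    rw [div_div_div_cancel_right₀ this]
  have hne : ∀ x : ℂ, 0 ≤ x.im → x.im ≤ 1 → dslope D (I / 2) x ≠ 0 := by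
    intro x h0 h1
    by_cases hx : x = I / 2
    · rw [hx, dslope_same, (hDd _).deriv]
      rw [show (π : ℂ) * (I / 2) = (π / 2 : ℂ) * I by ring, Complex.sinh_mul_I,
        Complex.sin_pi_div_two]
      simp [hpi.ne']
    · rw [dslope_of_ne _ hx, slope_def_field, hDI, sub_zero]
      exact div_ne_zero (cosh_ne_strip h0 h1 hx) (sub_ne_zero.mpr hx)
  have hGs : Differentiable ℂ (dslope G (I / 2)) := by
    rw [← differentiableOn_univ]
    exact (Complex.differentiableOn_dslope univ_mem).mpr hGd.differentiableOn
  have hDs : Differentiable ℂ (dslope D (I / 2)) := by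
    rw [← differentiableOn_univ]
    exact (Complex.differentiableOn_dslope univ_mem).mpr
      (fun x _ => (hDd x).differentiableAt.differentiableWithinAt)
  have hrect : ∀ R : ℝ, (∫ x : ℝ in (-R)..R, K x) - (∫ x : ℝ in (-R)..R, K (x + I)) +
      I • (∫ y : ℝ in (0:ℝ)..1, K (R + y * I)) - I • (∫ y : ℝ in (0:ℝ)..1, K (-R + y * I)) = 0 := by
    intro R
    have := Complex.integral_boundary_rect_eq_zero_of_differentiableOn K (-R : ℂ) (R + I)
      (by
        intro x hx
        rw [Complex.mem_reProdIm] at hx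
        have him := hx.2
        simp at him
        exact ((hGs x).div (hDs x) (hne x him.1 him.2)).differentiableWithinAt)
    simpa using this
  obtain ⟨M, hM⟩ := G_bound hτ z
  have htop : Tendsto (fun x : ℝ => Real.sinh (π * x)) atTop atTop := by
    apply tendsto_atTop_mono' atTop _ (tendsto_id.const_mul_atTop hpi)
    filter_upwards [eventually_ge_atTop 0] with x hx
    exact Real.self_le_sinh_iff.mpr (by simp only [id]; positivity)
  have hb0 : Tendsto (fun R : ℝ => (M + ‖G0‖) / Real.sinh (π * R)) atTop (𝓝 0) :=
    htop.const_div_atTop _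
  have hKb : ∀ s R y : ℝ, 0 < R → |s| = R → 0 ≤ y → y ≤ 1 →
      ‖K (s + y * I)‖ ≤ (M + ‖G0‖) / Real.sinh (π * R) := by
    intro s R y hR hs h0 h1
    have hsh : 0 < Real.sinh (π * R) := Real.sinh_pos_iff.mpr (by positivity)
    have hs0 : s ≠ 0 := by rintro rfl; simp at hs; linarith
    rw [hKeq _ (by
      intro h
      have := congrArg Complex.re h
      simp at this
      exact hs0 this), norm_div]
    have e1 : Real.sinh (π * R) ≤ ‖D (s + y * I)‖ := by
      have := norm_cosh_ge (π * s) (π * y)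
      have e2 : |Real.sinh (π * s)| = Real.sinh (π * R) := by
        rw [Real.abs_sinh, abs_mul, hs, abs_of_pos hpi]
      rw [e2] at this
      simp only [hD]
      convert this using 3
      push_cast; ring
    have e3 : ‖G (s + y * I) - G0‖ ≤ M + ‖G0‖ :=
      (norm_sub_le _ _).trans (by have := hM s y h0 h1; simp only [hG]; linarith)
    have : 0 ≤ M + ‖G0‖ := (norm_nonneg _).trans e3
    gcongr
  have hv1 : Tendsto (fun R : ℝ => ∫ y : ℝ in (0:ℝ)..1, K (R + y * I)) atTop (𝓝 0) := by
    apply squeeze_zero_norm' _ hb0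
    filter_upwards [eventually_gt_atTop 0] with R hR
    have := intervalIntegral.norm_integral_le_of_norm_le_const (a := 0) (b := 1)
      (f := fun y : ℝ => K (R + y * I)) (C := (M + ‖G0‖) / Real.sinh (π * R)) (by
      intro y hy
      rw [uIoc_of_le zero_le_one] at hy
      exact hKb R R y hR (abs_of_pos hR) hy.1.le hy.2)
    simpa using this
  have hv2 : Tendsto (fun R : ℝ => ∫ y : ℝ in (0:ℝ)..1, K (-R + y * I)) atTop (𝓝 0) := by
    apply squeeze_zero_norm' _ hb0
    filter_upwards [eventually_gt_atTop 0] with R hR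
    have := intervalIntegral.norm_integral_le_of_norm_le_const (a := 0) (b := 1)
      (f := fun y : ℝ => K (-R + y * I)) (C := (M + ‖G0‖) / Real.sinh (π * R)) (by
      intro y hy
      rw [uIoc_of_le zero_le_one] at hy
      have := hKb (-R) R y hR (by rw [abs_neg, abs_of_pos hR]) hy.1.le hy.2
      simpa using this)
    simpa using this
  have hsI : Integrable (fun x : ℝ => G0 * (((1 / Real.cosh (π * x) : ℝ)) : ℂ)) :=
    (sech_integrable.ofReal).const_mul G0
  have hsV : ∫ x : ℝ, G0 * (((1 / Real.cosh (π * x) : ℝ)) : ℂ) = G0 := by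
    rw [integral_const_mul]
    have := integral_ofReal (μ := volume) (𝕜 := ℂ) (f := fun x : ℝ => 1 / Real.cosh (π * x))
    rw [sech_integral] at this
    have e : ∫ x : ℝ, (((1 / Real.cosh (π * x) : ℝ)) : ℂ) = 1 := by simpa using this
    rw [e, mul_one]
  have hK1 : ∀ x : ℝ, K x = Complex.exp ((π : ℂ) * I * (x : ℂ) ^ 2 * τ - 2 * (π : ℂ) * (x : ℂ) * z) /
    Complex.cosh ((π : ℂ) * (x : ℂ)) - G0 * (((1 / Real.cosh (π * x) : ℝ)) : ℂ) := by
    intro x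
    rw [hKeq _ (by
      intro h
      have := congrArg Complex.im h
      simp at this)]
    push_cast
    simp only [hG, hD]
    ring
  have hK2 : ∀ x : ℝ, K (x + I) = G0 * (((1 / Real.cosh (π * x) : ℝ)) : ℂ) -
      Complex.exp (-(2 * π * I * z) - π * I * τ) *
      (Complex.exp ((π : ℂ) * I * (x : ℂ) ^ 2 * τ - 2 * (π : ℂ) * (x : ℂ) * (z + τ)) /
        Complex.cosh ((π : ℂ) * (x : ℂ))) := by
    intro x
    rw [hKeq _ (by
      intro h
      have := congrArg Complex.im h
      simp at this)]
    have e1 : D (x + I) = -Complex.cosh (π * x) := by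
      simp only [hD]
      rw [mul_add, Complex.cosh_add, Complex.cosh_mul_I, Complex.sinh_mul_I, Complex.cos_pi,
        Complex.sin_pi]
      ring
    have e2 : G (x + I) = Complex.exp (-(2 * π * I * z) - π * I * τ) *
        Complex.exp ((π : ℂ) * I * (x : ℂ) ^ 2 * τ - 2 * (π : ℂ) * (x : ℂ) * (z + τ)) := by
      simp only [hG]
      rw [← Complex.exp_add]
      congr 1
      have := Complex.I_sq
      linear_combination (2 * π * x * τ + π * I * τ) * this
    rw [e1, e2]
    push_cast
    have := cosh_real_ne x
    field_simp
    ring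
  have hm1 := mordell_integrable hτ z
  have hm2 := (mordell_integrable hτ (z + τ)).const_mul (Complex.exp (-(2 * π * I * z) - π * I * τ))
  have hI1 : Integrable (fun x : ℝ => K x) := by
    simp only [hK1]; exact hm1.sub hsI
  have hI2 : Integrable (fun x : ℝ => K (x + I)) := by
    simp only [hK2]; exact hsI.sub hm2
  have hV1 : ∫ x : ℝ, K x = mordell z τ - G0 := by
    simp only [hK1]; rw [integral_sub hm1 hsI, hsV]; rfl
  have hV2 : ∫ x : ℝ, K (x + I) = G0 - Complex.exp (-(2 * π * I * z) - π * I * τ) *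
      mordell (z + τ) τ := by
    simp only [hK2]; rw [integral_sub hsI hm2, hsV, integral_const_mul]; rfl
  have t1 := intervalIntegral_tendsto_integral hI1 tendsto_neg_atTop_atBot tendsto_id
  have t2 := intervalIntegral_tendsto_integral hI2 tendsto_neg_atTop_atBot tendsto_id
  have t := ((t1.sub t2).add (hv1.const_smul I)).sub (hv2.const_smul I)
  have t0 : Tendsto (fun _ : ℝ => (0 : ℂ)) atTop (𝓝 0) := tendsto_const_nhds
  have := tendsto_nhds_unique (t.congr (fun R => by simpa using hrect R)) t0
  rw [hV1, hV2] at this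
  simp only [smul_zero, add_zero, sub_zero] at this
  linear_combination this


lemma neg_inv_im {τ : ℂ} (hτ : 0 < τ.im) : 0 < (-1 / τ).im := by
  have hτ0 : τ ≠ 0 := by rintro rfl; simp at hτ
  rw [neg_div, Complex.neg_im, one_div, Complex.inv_im, neg_div, neg_neg]
  exact div_pos hτ (Complex.normSq_pos.mpr hτ0)

lemma InL_S {τ : ℂ} (hτ : 0 < τ.im) {u : ℂ} : InL (-1 / τ) (u / τ) ↔ InL τ u := by
  have hτ0 : τ ≠ 0 := by rintro rfl; simp at hτ
  constructor
  · rintro ⟨m, n, h⟩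
    refine ⟨n, -m, ?_⟩
    push_cast
    field_simp at h
    linear_combination h
  · rintro ⟨m, n, h⟩
    refine ⟨-n, m, ?_⟩
    rw [h]
    push_cast
    field_simp
    ring

lemma S_const {τ : ℂ} (hτ : 0 < τ.im) :
    (τ / I) ^ (-(1 / 2 : ℂ)) * (τ / I) ^ (-(1 / 2 : ℂ)) * (-I * τ) = 1 := by
  have hτ0 : τ ≠ 0 := by rintro rfl; simp at hτ
  have h : τ / I = -I * τ := by rw [Complex.div_I]; ring
  have h0 : -I * τ ≠ 0 := mul_ne_zero (neg_ne_zero.mpr Complex.I_ne_zero) hτ0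
  rw [h, ← Complex.cpow_add _ _ h0, show -(1 / 2 : ℂ) + -(1 / 2) = -1 by norm_num,
    Complex.cpow_neg_one, inv_mul_cancel₀ h0]

lemma jtheta_S {τ : ℂ} (hτ : 0 < τ.im) (v : ℂ) :
    jtheta v τ = I * (τ / I) ^ (-(1 / 2 : ℂ)) * Complex.exp (-(π * I * v ^ 2 / τ)) *
      jtheta (v / τ) (-1 / τ) := by
  have hτ0 : τ ≠ 0 := by rintro rfl; simp at hτ
  have h : τ / I = -I * τ := by rw [Complex.div_I]; ring
  rw [jtheta_eq, jtheta_eq, show v + τ / 2 + 1 / 2 = (v + τ / 2 - 1 / 2) + 1 by ring,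
    jacobiTheta₂_add_left, jacobiTheta₂_functional_equation,
    show (v + τ / 2 - 1 / 2) / τ = v / τ + (-1 / τ) / 2 + 1 / 2 by field_simp; ring,
    h, Complex.cpow_neg, one_div ((-I * τ) ^ _)]
  have key : Complex.exp (π * I * v + π * I * τ / 4) *
      Complex.exp (-π * I * (v + τ / 2 - 1 / 2) ^ 2 / τ) =
      I * Complex.exp (-(π * I * v ^ 2 / τ)) *
        Complex.exp (π * I * (v / τ) + π * I * (-1 / τ) / 4) := by
    have hI : Complex.exp (π / 2 * I) = I := Complex.exp_pi_div_two_mul_I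
    nth_rewrite 4 [← hI]
    rw [← Complex.exp_add, ← Complex.exp_add, ← Complex.exp_add]
    congr 1
    field_simp
    ring
  linear_combination ((-I * τ) ^ (1 / 2 : ℂ))⁻¹ *
    jacobiTheta₂ (v / τ + (-1 / τ) / 2 + 1 / 2) (-1 / τ) * key

/-- The error term in the modular transformation. -/
def ErrS (v τ u : ℂ) : ℂ :=
  mu u v τ + (τ / I) ^ (-(1 / 2 : ℂ)) * Complex.exp ((π : ℂ) * I * (u - v) ^ 2 / τ) *
        mu (u / τ) (v / τ) (-1 / τ) - (1 / 2) * mordell (u - v) τ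

lemma mu_diff {τ : ℂ} (hτ : 0 < τ.im) (v : ℂ) {c : ℂ} (hc : ¬ InL τ c) :
    DifferentiableAt ℂ (fun u => mu u v τ) c := by
  simp_rw [mu_eq]
  exact (AA_diff_left hτ v hc).div_const _

lemma ErrS_diff {τ : ℂ} (hτ : 0 < τ.im) (v : ℂ) {c : ℂ} (hc : ¬ InL τ c) :
    DifferentiableAt ℂ (ErrS v τ) c := by
  unfold ErrS
  have h1 := mu_diff hτ v hc
  have h2 : DifferentiableAt ℂ (fun u => mu (u / τ) (v / τ) (-1 / τ)) c :=
    DifferentiableAt.comp (g := fun u => mu u (v / τ) (-1 / τ)) (f := fun u => u / τ) c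
      (mu_diff (neg_inv_im hτ) (v / τ) (mt (InL_S hτ).mp hc)) (by fun_prop)
  have h3 : DifferentiableAt ℂ (fun u => mordell (u - v) τ) c :=
    DifferentiableAt.comp (g := fun u => mordell u τ) (f := fun u => u - v) c
      (mordell_diff hτ _) (by fun_prop)
  fun_prop

lemma ErrS_add_one {τ : ℂ} (hτ : 0 < τ.im) {u v : ℂ} (hu : ¬ InL τ u) (hv : ¬ InL τ v) :
    ErrS v τ (u + 1) = -ErrS v τ u := by
  have hτ0 : τ ≠ 0 := by rintro rfl; simp at hτ
  have hw : ¬ InL (-1 / τ) ((u + 1) / τ) := by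
    rw [InL_S hτ, InL_add (InL_one τ)]; exact hu
  have h := mu_add_tau (neg_inv_im hτ) hw (mt (InL_S hτ).mp hv)
  rw [show (u + 1) / τ + -1 / τ = u / τ by field_simp; ring] at h
  have hm := mordell_add_one hτ (u - v)
  unfold ErrS
  rw [mu_add_one, show u + 1 - v = u - v + 1 by ring]
  have k1 : Complex.exp (π * I * (u - v + 1) ^ 2 / τ) =
      Complex.exp (π * I * (u - v) ^ 2 / τ) *
      Complex.exp (2 * π * I * ((u + 1) / τ - v / τ) + π * I * (-1 / τ)) := by
    rw [← Complex.exp_add]; congr 1; field_simp; ring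
  have k2 : Complex.exp (π * I * (u - v) ^ 2 / τ) *
      Complex.exp (π * I * ((u + 1) / τ - v / τ) + 3 * π * I * (-1 / τ) / 4) =
      Complex.exp (π * I * (u - v + 1 / 2) ^ 2 / τ) := by
    rw [← Complex.exp_add]; congr 1; field_simp; ring
  rw [← k2] at hm
  rw [k1]
  linear_combination (-1 / 2) * hm + (τ / I) ^ (-(1 / 2 : ℂ)) *
    Complex.exp (π * I * (u - v) ^ 2 / τ) * h

lemma ErrS_add_tau {τ : ℂ} (hτ : 0 < τ.im) {u v : ℂ} (hu : ¬ InL τ u) (hv : ¬ InL τ v) :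
    ErrS v τ (u + τ) = -Complex.exp (2 * π * I * (u - v) + π * I * τ) * ErrS v τ u := by
  have hτ0 : τ ≠ 0 := by rintro rfl; simp at hτ
  have hm := mordell_add_tau hτ (u - v)
  unfold ErrS
  rw [mu_add_tau hτ hu hv, show (u + τ) / τ = u / τ + 1 by field_simp, mu_add_one,
    show u + τ - v = u - v + τ by ring]
  have k1 : Complex.exp (π * I * (u - v + τ) ^ 2 / τ) =
      Complex.exp (π * I * (u - v) ^ 2 / τ) *
      Complex.exp (2 * π * I * (u - v) + π * I * τ) := by
    rw [← Complex.exp_add]; congr 1; field_simp; ring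
  have k2 : Complex.exp (2 * π * I * (u - v) + π * I * τ) *
      Complex.exp (-(2 * π * I * (u - v)) - π * I * τ) = 1 := by
    rw [← Complex.exp_add, ← Complex.exp_zero]; congr 1; ring
  have k3 : Complex.exp (2 * π * I * (u - v) + π * I * τ) *
      Complex.exp (-(π * I * (u - v)) - π * I * τ / 4) =
      Complex.exp (π * I * (u - v) + 3 * π * I * τ / 4) := by
    rw [← Complex.exp_add]; congr 1; ring
  rw [k1, ← k3]
  linear_combination (-1 / 2) * Complex.exp (2 * π * I * (u - v) + π * I * τ) * hm +
    (1 / 2) * mordell (u - v + τ) τ * k2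

lemma ErrS_mul {τ : ℂ} (hτ : 0 < τ.im) {u v : ℂ} (hu : ¬ InL τ u) (hv : ¬ InL τ v) :
    ErrS v τ u * jtheta (u - v) τ = 0 := by
  have hτ0 : τ ≠ 0 := by rintro rfl; simp at hτ
  obtain ⟨g1, hg1, hg10, hG1⟩ := AA_pole hτ v
  obtain ⟨g2, hg2, hg20, hG2⟩ := AA_pole (neg_inv_im hτ) (v / τ)
  have hθ := jtheta_ne_zero hτ hv
  have hθ' := jtheta_ne_zero (neg_inv_im hτ) (mt (InL_S hτ).mp hv)
  set c := (τ / I) ^ (-(1 / 2 : ℂ)) with hc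
  have hjd : Differentiable ℂ (fun u => jtheta (u - v) τ) := by
    intro x
    exact DifferentiableAt.comp (g := fun u => jtheta u τ) (f := fun u => u - v) x
      (jtheta_diff hτ _) (by fun_prop)
  have hmd : Differentiable ℂ (fun u => mordell (u - v) τ) := by
    intro x
    exact DifferentiableAt.comp (g := fun u => mordell u τ) (f := fun u => u - v) x
      (mordell_diff hτ _) (by fun_prop)
  have hed : Differentiable ℂ (fun u : ℂ => Complex.exp (π * I * (u - v) ^ 2 / τ)) := by
    intro x; fun_prop
  have ha : AnalyticAt ℂ (fun u : ℂ => u / τ) 0 := by fun_prop (disch := assumption)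
  have hg2' : AnalyticAt ℂ (fun u => g2 (u / τ)) 0 :=
    AnalyticAt.fun_comp (g := g2) (f := fun u => u / τ) (by simpa using hg2) ha
  have htend : Tendsto (fun u : ℂ => u / τ) (𝓝[≠] 0) (𝓝[≠] 0) := by
    apply tendsto_nhdsWithin_of_tendsto_nhds_of_eventually_within
    · have : Tendsto (fun u : ℂ => u / τ) (𝓝 0) (𝓝 (0 / τ)) :=
        Continuous.tendsto (by fun_prop) 0
      rw [zero_div] at this
      exact this.mono_left nhdsWithin_le_nhds
    · filter_upwards [self_mem_nhdsWithin] with x hx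
      exact div_ne_zero hx hτ0
  obtain ⟨K, hK⟩ := const_of_periods hτ (fun u => ErrS v τ u * jtheta (u - v) τ)
    (fun x hx => (ErrS_diff hτ v hx).mul (hjd x))
    (fun u => (g1 u / jtheta v τ + c * Complex.exp (π * I * (u - v) ^ 2 / τ) * τ * g2 (u / τ) /
      jtheta (v / τ) (-1 / τ) - u * ((1 / 2) * mordell (u - v) τ)) * jtheta (u - v) τ)
    (by
      have e1 := hed.analyticAt 0
      have e2 := hmd.analyticAt 0
      have e3 := hjd.analyticAt 0
      refine AnalyticAt.mul (AnalyticAt.sub (AnalyticAt.add ?_ ?_) ?_) e3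
      · exact hg1.div analyticAt_const hθ
      · exact (((analyticAt_const.mul e1).mul analyticAt_const).mul hg2').div analyticAt_const hθ'
      · exact analyticAt_id.mul (analyticAt_const.mul e2))
    (by
      have hS := jtheta_S hτ v
      have hc2 := S_const hτ
      rw [← hc] at hS hc2
      simp only [zero_div, hg10, hg20, zero_mul, sub_zero, zero_sub]
      apply mul_eq_zero_of_left
      have k : Complex.exp (π * I * (-v) ^ 2 / τ) * Complex.exp (-(π * I * v ^ 2 / τ)) = 1 := by
        rw [← Complex.exp_add, ← Complex.exp_zero]; congr 1; ring
      have : (1 : ℂ) / jtheta v τ + c * Complex.exp (π * I * (-v) ^ 2 / τ) * τ /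
          jtheta (v / τ) (-1 / τ) = 0 := by
        rw [div_add_div _ _ hθ hθ', div_eq_zero_iff]
        left
        rw [hS]
        linear_combination (I * c * c * τ * jtheta (v / τ) (-1 / τ)) * k -
          jtheta (v / τ) (-1 / τ) * hc2
      linear_combination (-1 / (2 * π * I)) * this)
    (by
      filter_upwards [hG1, htend.eventually hG2, self_mem_nhdsWithin] with u h1 h2 hu0
      have hu0 : u ≠ 0 := hu0
      simp only [ErrS, mu_eq]
      rw [h1, h2, ← hc]
      field_simp)
    1 1 (by simp) (by simp)
    (by
      intro x hx
      rw [ErrS_add_one hτ hx hv, show x + 1 - v = x - v + 1 by ring, jtheta_add_one]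
      ring)
    (by
      intro x hx
      rw [ErrS_add_tau hτ hx hv, show x + τ - v = x - v + τ by ring, jtheta_add_tau]
      have k2 : Complex.exp (2 * π * I * (x - v) + π * I * τ) *
          Complex.exp (-(2 * π * I * (x - v)) - π * I * τ) = 1 := by
        rw [← Complex.exp_add, ← Complex.exp_zero]; congr 1; ring
      linear_combination (ErrS v τ x * jtheta (x - v) τ) * k2)
  have hv0 := hK v hv
  simp only [sub_self, jtheta_zero, mul_zero] at hv0
  rw [hv0]
  exact hK u hu

lemma ErrS_zero {τ : ℂ} (hτ : 0 < τ.im) {u v : ℂ} (hu : ¬ InL τ u) (hv : ¬ InL τ v) :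
    ErrS v τ u = 0 := by
  have hcont := (ErrS_diff hτ v hu).continuousAt.tendsto.mono_left
    (nhdsWithin_le_nhds (s := {u}ᶜ))
  have htend : Tendsto (fun x : ℂ => x - v) (𝓝[≠] u) (𝓝[≠] (u - v)) := by
    apply tendsto_nhdsWithin_of_tendsto_nhds_of_eventually_within
    · exact (Continuous.tendsto (by fun_prop) u).mono_left nhdsWithin_le_nhds
    · filter_upwards [self_mem_nhdsWithin] with x hx
      intro h
      exact hx (by simpa using h)
  have hz : ∀ᶠ x in 𝓝[≠] u, ErrS v τ x = 0 := by
    filter_upwards [htend.eventually (InL_punct hτ (u - v)),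
      (InL_compl hτ hu).filter_mono nhdsWithin_le_nhds] with x h1 h2
    exact (mul_eq_zero.mp (ErrS_mul hτ h2 hv)).resolve_right (jtheta_ne_zero hτ h1)
  refine tendsto_nhds_unique hcont ?_
  exact tendsto_const_nhds.congr' (by filter_upwards [hz] with x hx using hx.symm)

/-- Zwegers's transformation properties of `μ` (Lemma 6.1 of the paper).  Here
`a = e^{2πiu}`, `b = e^{2πiv}`, `a^{-1/2} = e^{-πiu}`, `b^{1/2} = e^{πiv}`,
`q^{-1/2} = e^{-πiτ}`, `q^{-1/8} = e^{-πiτ/4}`, `ζ₈⁻¹ = e^{-πi/4}`, and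
`(τ/i)^{-1/2}` is the principal branch. -/
theorem stmt15 (τ u v : ℂ) (hτ : 0 < τ.im)
    (hu : ¬∃ m n : ℤ, u = (m : ℂ) * τ + (n : ℂ))
    (hv : ¬∃ m n : ℤ, v = (m : ℂ) * τ + (n : ℂ)) :
    mu u v τ = mu v u τ ∧
    mu (u + 1) v τ = -mu u v τ ∧
    Complex.exp (-(2 * (π : ℂ) * I * u)) * Complex.exp (2 * (π : ℂ) * I * v) *
        Complex.exp (-((π : ℂ) * I * τ)) * mu (u + τ) v τ =
      -mu u v τ +
        Complex.exp (-((π : ℂ) * I * u)) * Complex.exp ((π : ℂ) * I * v) *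
          Complex.exp (-((π : ℂ) * I * τ) / 4) ∧
    mu u v (τ + 1) = Complex.exp (-((π : ℂ) * I) / 4) * mu u v τ ∧
    (τ / I) ^ (-(1 / 2 : ℂ)) * Complex.exp ((π : ℂ) * I * (u - v) ^ 2 / τ) *
        mu (u / τ) (v / τ) (-1 / τ) =
      -mu u v τ + (1 / 2) * mordell (u - v) τ := by
  have hu' : ¬ InL τ u := hu
  have hv' : ¬ InL τ v := hv
  refine ⟨mu_symm hτ hu' hv', mu_add_one u v τ, mu_three hτ hu' hv', mu_tau_add_one u v τ, ?_⟩
  have h := ErrS_zero hτ hu' hv'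
  unfold ErrS at h
  linear_combination h
end
end

section
/- Define G: ℍ → ℂ by G(τ) = −(2i/√π)·Σ_{l≥0} (−1)^l·Γ(1/2, π·(2l+1)²·Im(τ)/2)·e^{−2πiτ(2l+1)²/8}. Then G is real analytic on ℍ and satisfies ∂G/∂τ̄ (τ) = −(2·Im(τ))^{−1/2}·conj(η(τ)³) for all τ ∈ ℍ, where ∂/∂τ̄ denotes the antiholomorphic Wirtinger derivative (1/2)(∂/∂x + i·∂/∂y) in τ = x + iy, and conj denotes complex conjugation. (G is the non-holomorphic part Q⁻ of the weight 1/2 harmonic weak Maass form Q; this identity says that the shadow of Q is proportional to η³.) -/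
noncomputable section
open Complex Real

/-- Dedekind eta function `η(τ) = e^{πiτ/12} ∏_{n≥1} (1 − qⁿ)`. -/
def dedekindEta (τ : ℂ) : ℂ :=
  Complex.exp ((π : ℂ) * I * τ / 12) * ∏' n : ℕ, (1 - nome τ ^ (n + 1))

/-- The upper incomplete Gamma function `Γ(s,x) = ∫_x^∞ e^{−t} t^{s−1} dt` (real `x > 0`). -/
def incGamma (s x : ℝ) : ℝ := ∫ t in Set.Ioi x, Real.exp (-t) * t ^ (s - 1)

/-- `G(τ) = −(2i/√π) Σ_{l≥0} (−1)^l Γ(1/2, π(2l+1)² Im τ/2) e^{−2πiτ(2l+1)²/8}`,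
the non-holomorphic part `Q⁻` of the harmonic Maass form `Q`. -/
def Gfun (τ : ℂ) : ℂ :=
  -(2 * I / (Real.sqrt π : ℂ)) *
    ∑' l : ℕ, (-1 : ℂ) ^ l * (incGamma (1 / 2) (π * (2 * l + 1) ^ 2 * τ.im / 2) : ℂ) *
      Complex.exp (-(2 * (π : ℂ) * I * τ * ((2 * (l : ℂ) + 1) ^ 2) / 8))

/-- The antiholomorphic Wirtinger derivative `(1/2)(∂/∂x + i ∂/∂y)` of `f : ℂ → ℂ` at `z`. -/
def wirtingerBar (f : ℂ → ℂ) (z : ℂ) : ℂ :=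
  (1 / 2) * (fderiv ℝ f z 1 + I * fderiv ℝ f z I)

/-- Partial products `(q;q)_m`. -/
def Qf (q : ℂ) (m : ℕ) : ℂ := ∏ i ∈ Finset.range m, (1 - q ^ (i + 1))

/-- Inverse of the partial product, extended by zero to negative indices. -/
def Ri (q : ℂ) (j : ℤ) : ℂ := if j < 0 then 0 else (Qf q j.toNat)⁻¹

lemma one_sub_pow_ne {q : ℂ} (hq : ‖q‖ < 1) (i : ℕ) : 1 - q ^ (i + 1) ≠ 0 := by
  intro h
  have h1 : q ^ (i + 1) = 1 := (sub_eq_zero.mp h).symm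
  have h2 : ‖q‖ ^ (i + 1) = 1 := by rw [← norm_pow, h1, norm_one]
  have h3 : ‖q‖ ^ (i + 1) < 1 := pow_lt_one₀ (norm_nonneg _) hq (by omega)
  linarith

lemma Qf_ne {q : ℂ} (hq : ‖q‖ < 1) (m : ℕ) : Qf q m ≠ 0 :=
  Finset.prod_ne_zero_iff.mpr fun i _ => one_sub_pow_ne hq i

lemma Qf_succ (q : ℂ) (m : ℕ) : Qf q (m + 1) = Qf q m * (1 - q ^ (m + 1)) := by
  simp [Qf, Finset.prod_range_succ]

lemma Ri_nat (q : ℂ) (m : ℕ) : Ri q (m : ℤ) = (Qf q m)⁻¹ := by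
  simp [Ri]

lemma Ri_neg (q : ℂ) {j : ℤ} (h : j < 0) : Ri q j = 0 := by simp [Ri, h]

lemma Ri_pred {q : ℂ} (hq : ‖q‖ < 1) (j : ℤ) : Ri q (j - 1) = (1 - q ^ j) * Ri q j := by
  rcases lt_trichotomy j 0 with h | h | h
  · rw [Ri_neg q h, Ri_neg q (by omega)]; simp
  · subst h; rw [Ri_neg q (by omega)]; simp
  · obtain ⟨m, rfl⟩ : ∃ m : ℕ, j = ((m + 1 : ℕ) : ℤ) := ⟨(j - 1).toNat, by omega⟩
    have e : ((m + 1 : ℕ) : ℤ) - 1 = (m : ℤ) := by push_cast; ring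
    rw [e, Ri_nat, Ri_nat, Qf_succ, zpow_natCast]
    have := Qf_ne hq m
    have := one_sub_pow_ne hq m
    field_simp

/-- Coefficients of the finite Jacobi identity. -/
def cJ (q : ℂ) (n k : ℕ) : ℂ :=
  (-1) ^ k * q ^ (k * (k + 1) / 2) * (Qf q (2 * n + 1) * (Ri q ((n : ℤ) - k) * Ri q ((n : ℤ) + k + 1)))

lemma tri_succ (k : ℕ) : (k + 1) * (k + 1 + 1) / 2 = k * (k + 1) / 2 + (k + 1) := by
  have : (k + 1) * (k + 1 + 1) = k * (k + 1) + 2 * (k + 1) := by ring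
  rw [this]; omega

lemma cJ_zero_of_lt (q : ℂ) {n k : ℕ} (h : n < k) : cJ q n k = 0 := by
  rw [cJ, Ri_neg q (by omega)]; simp

lemma cJ_rec_succ {q : ℂ} (hq0 : q ≠ 0) (hq : ‖q‖ < 1) (n k : ℕ) :
    cJ q (n + 1) (k + 1) = (1 + (q ^ (n + 1)) ^ 2) * cJ q n (k + 1)
      - q ^ (n + 1) * (cJ q n k + cJ q n (k + 2)) := by
  have a1 := Ri_pred hq ((n : ℤ) - k)
  have a2 := Ri_pred hq ((n : ℤ) - k - 1)
  have b1 := Ri_pred hq ((n : ℤ) + k + 3)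
  have b2 := Ri_pred hq ((n : ℤ) + k + 2)
  have e1 : q ^ ((n : ℤ) - k) = q ^ n / q ^ k := by
    rw [zpow_sub₀ hq0]; simp
  have e2 : q ^ ((n : ℤ) - k - 1) = q ^ n / q ^ k / q := by
    rw [zpow_sub₀ hq0, e1]; simp
  have e3 : q ^ ((n : ℤ) + k + 3) = q ^ n * q ^ k * q ^ 3 := by
    rw [zpow_add₀ hq0, zpow_add₀ hq0]; norm_cast
  have e4 : q ^ ((n : ℤ) + k + 2) = q ^ n * q ^ k * q ^ 2 := by
    rw [zpow_add₀ hq0, zpow_add₀ hq0]; norm_cast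
  rw [e1] at a1
  rw [e2, a1] at a2
  rw [e3] at b1
  rw [show (n : ℤ) + k + 3 - 1 = (n : ℤ) + k + 2 by ring] at b1
  rw [e4, b1] at b2
  have hk := pow_ne_zero k hq0
  simp only [cJ]
  rw [show k + 2 = k + 1 + 1 from rfl, tri_succ (k + 1), tri_succ k]
  rw [show 2 * (n + 1) + 1 = (2 * n + 1 + 1) + 1 by ring, Qf_succ, Qf_succ]
  push_cast
  rw [show (n : ℤ) + 1 - (k + 1) = n - k by ring, show (n : ℤ) + 1 + (k + 1) + 1 = n + k + 3 by ring,
    show (n : ℤ) - (k + 1) = n - k - 1 by ring, show (n : ℤ) + (k + 1) + 1 = n + k + 2 by ring,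
    show (n : ℤ) + k + 1 = n + k + 2 - 1 by ring,
    show (n : ℤ) - (k + 1 + 1) = n - k - 1 - 1 by ring,
    show (n : ℤ) + (k + 1 + 1) + 1 = n + k + 3 by ring, a2, a1, b2, b1]
  have p1 : q ^ (2 * n + 1 + 1) = (q ^ n) ^ 2 * q ^ 2 := by ring
  have p2 : q ^ (2 * n + 1 + 1 + 1) = (q ^ n) ^ 2 * q ^ 3 := by ring
  rw [p1, p2]
  simp only [pow_add, pow_one]
  generalize Ri q ((n : ℤ) - k) = A
  generalize Ri q ((n : ℤ) + k + 3) = B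
  generalize q ^ (k * (k + 1) / 2) = T
  generalize Qf q (2 * n) = Z
  generalize Qf q (2 * n + 1) = Z
  generalize ((-1 : ℂ) ^ k) = s
  generalize q ^ n = x at *
  generalize q ^ k = y at *
  field_simp
  ring

lemma cJ_rec_zero {q : ℂ} (hq0 : q ≠ 0) (hq : ‖q‖ < 1) (n : ℕ) :
    cJ q (n + 1) 0 = (1 + (q ^ (n + 1)) ^ 2) * cJ q n 0
      - q ^ (n + 1) * (- cJ q n 0 + cJ q n 1) := by
  simp only [cJ]
  push_cast
  rw [show (n : ℤ) + 1 - 0 = ((n + 1 : ℕ) : ℤ) by push_cast; ring,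
    show (n : ℤ) + 1 + 0 + 1 = ((n + 1 + 1 : ℕ) : ℤ) by push_cast; ring,
    show (n : ℤ) - 0 = (n : ℤ) by ring,
    show (n : ℤ) + 0 + 1 = ((n + 1 : ℕ) : ℤ) by push_cast; ring,
    show (n : ℤ) + 1 + 1 = ((n + 1 + 1 : ℕ) : ℤ) by push_cast; ring,
    Ri_pred hq, Ri_nat, Ri_nat, Ri_nat, zpow_natCast]
  rw [show 2 * (n + 1) + 1 = (2 * n + 1 + 1) + 1 by ring, Qf_succ q (2 * n + 1 + 1), 
    Qf_succ q (2 * n + 1), Qf_succ q (n + 1), Qf_succ q n]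
  have h0 := Qf_ne hq n
  have h1 := one_sub_pow_ne hq n
  have h2 := one_sub_pow_ne hq (n + 1)
  generalize Qf q (2 * n + 1) = Z
  generalize Qf q n = A at *
  have p1 : q ^ (2 * n + 1 + 1) = (q ^ n) ^ 2 * q ^ 2 := by ring
  have p2 : q ^ (2 * n + 1 + 1 + 1) = (q ^ n) ^ 2 * q ^ 3 := by ring
  rw [p1, p2]
  simp only [pow_add, pow_one] at *
  generalize q ^ n = x at *
  have h2' : 1 - x * q ^ 2 ≠ 0 := by rwa [pow_two, ← mul_assoc]
  rw [mul_assoc x q q, ← pow_two]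
  norm_num
  field_simp
  ring

lemma sum_rec (c d : ℕ → ℂ) (x : ℂ) (h0 : d 0 = (1 + x ^ 2) * c 0 - x * (-c 0 + c 1))
    (h : ∀ k, d (k + 1) = (1 + x ^ 2) * c (k + 1) - x * (c k + c (k + 2))) (N : ℕ) :
    ∑ k ∈ Finset.range (N + 1), (2 * (k : ℂ) + 1) * d k =
      (1 - x) ^ 2 * ∑ k ∈ Finset.range (N + 1), (2 * (k : ℂ) + 1) * c k
        - x * ((2 * N + 1) * c (N + 1) - (2 * N + 3) * c N) := by
  induction N with
  | zero => simp [h0]; ring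
  | succ N ih =>
    rw [Finset.sum_range_succ, ih, Finset.sum_range_succ _ (N + 1), h]
    push_cast
    ring

lemma finite_jacobi {q : ℂ} (hq0 : q ≠ 0) (hq : ‖q‖ < 1) (n : ℕ) :
    ∑ k ∈ Finset.range (n + 1), (2 * (k : ℂ) + 1) * cJ q n k = Qf q n ^ 2 := by
  induction n with
  | zero =>
    have h := one_sub_pow_ne hq 0
    have e : Ri q 1 = (Qf q 1)⁻¹ := Ri_nat q 1
    have e0 : Ri q 0 = (Qf q 0)⁻¹ := Ri_nat q 0
    simp at h
    simp [cJ, e, e0, Qf, h]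
  | succ n ih =>
    rw [sum_rec (cJ q n) (cJ q (n + 1)) (q ^ (n + 1)) (cJ_rec_zero hq0 hq n)
      (cJ_rec_succ hq0 hq n) (n + 1), Finset.sum_range_succ, ih, cJ_zero_of_lt q (by omega),
      cJ_zero_of_lt q (by omega), Qf_succ]
    ring

lemma Qf_tendsto {q : ℂ} (hq : ‖q‖ < 1) :
    Filter.Tendsto (Qf q) Filter.atTop (nhds (∏' n : ℕ, (1 - q ^ (n + 1)))) :=
  (ModularForm.multipliable_one_sub_pow hq).hasProd.tendsto_prod_nat

lemma Qinf_ne {q : ℂ} (hq : ‖q‖ < 1) : ∏' n : ℕ, (1 - q ^ (n + 1)) ≠ 0 := by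
  refine tprod_one_add_ne_zero_of_summable (f := fun n : ℕ ↦ -q ^ (n + 1)) ?_ ?_
  · exact fun i ↦ by simpa [sub_eq_add_neg] using one_sub_pow_ne hq i
  · simpa using (summable_nat_add_iff 1).mpr (summable_geometric_of_lt_one (norm_nonneg _) hq)

lemma tri_ge (k : ℕ) : k ≤ k * (k + 1) / 2 := by
  rw [Nat.le_div_iff_mul_le (by norm_num)]
  nlinarith [Nat.zero_le (k * (k - 1)), k.eq_zero_or_pos.imp id Nat.succ_le_of_lt, sq_nonneg k,
    show k * 2 ≤ k * (k + 1) by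
      rcases k.eq_zero_or_pos with h | h
      · simp [h]
      · exact Nat.mul_le_mul_left k (by omega)]

lemma jacobi_cube {q : ℂ} (hq0 : q ≠ 0) (hq : ‖q‖ < 1) :
    (∏' n : ℕ, (1 - q ^ (n + 1))) ^ 3 =
      ∑' k : ℕ, (-1) ^ k * (2 * (k : ℂ) + 1) * q ^ (k * (k + 1) / 2) := by
  set P := ∏' n : ℕ, (1 - q ^ (n + 1)) with hP
  have hPne : P ≠ 0 := Qinf_ne hq
  have hT : Filter.Tendsto (Qf q) Filter.atTop (nhds P) := Qf_tendsto hq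
  have hTi : Filter.Tendsto (fun m => (Qf q m)⁻¹) Filter.atTop (nhds P⁻¹) := hT.inv₀ hPne
  obtain ⟨M, hM⟩ := (Metric.isBounded_range_of_tendsto _ hT).exists_norm_le
  obtain ⟨M', hM'⟩ := (Metric.isBounded_range_of_tendsto _ hTi).exists_norm_le
  have hM : ∀ m, ‖Qf q m‖ ≤ M := fun m => hM _ ⟨m, rfl⟩
  have hM' : ∀ m, ‖(Qf q m)⁻¹‖ ≤ M' := fun m => hM' _ ⟨m, rfl⟩
  have hM0 : 0 ≤ M := (norm_nonneg _).trans (hM 0)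
  have hM'0 : 0 ≤ M' := (norm_nonneg _).trans (hM' 0)
  have hR : ∀ j, ‖Ri q j‖ ≤ M' := by
    intro j
    unfold Ri
    split_ifs
    · simpa using hM'0
    · exact hM' _
  have hRk : ∀ a : ℤ, Filter.Tendsto (fun n : ℕ => Ri q ((n : ℤ) + a)) Filter.atTop (nhds P⁻¹) := by
    intro a
    have h1 : Filter.Tendsto (fun n : ℕ => ((n : ℤ) + a).toNat) Filter.atTop Filter.atTop := by
      refine Filter.tendsto_atTop.mpr fun b => ?_
      filter_upwards [Filter.eventually_ge_atTop (b + a.natAbs)] with n hn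
      omega
    refine (hTi.comp h1).congr' ?_
    filter_upwards [Filter.eventually_ge_atTop (a.natAbs)] with n hn
    have : ¬ ((n : ℤ) + a < 0) := by omega
    simp [Ri, this]
  have hsum : Summable fun k : ℕ => (2 * (k : ℝ) + 1) * ‖q‖ ^ k * (M * (M' * M')) := by
    refine Summable.mul_right _ ?_
    have h1 : Summable fun k : ℕ => (k : ℝ) * ‖q‖ ^ k := by
      simpa using summable_pow_mul_geometric_of_norm_lt_one 1 (r := ‖q‖) (by simpa using hq)
    have h2 := summable_geometric_of_lt_one (norm_nonneg q) hq
    refine ((h1.mul_left 2).add h2).congr fun k => by ring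
  have key := tendsto_tsum_of_dominated_convergence (𝓕 := Filter.atTop)
    (f := fun n k : ℕ => (2 * (k : ℂ) + 1) * cJ q n k)
    (g := fun k : ℕ => (2 * (k : ℂ) + 1) * ((-1) ^ k * q ^ (k * (k + 1) / 2) * (P * (P⁻¹ * P⁻¹))))
    hsum ?_ ?_
  · have e1 : ∀ n, ∑' k : ℕ, (2 * (k : ℂ) + 1) * cJ q n k = Qf q n ^ 2 := by
      intro n
      rw [← finite_jacobi hq0 hq n, tsum_eq_sum]
      intro k hk
      rw [cJ_zero_of_lt q (by simpa using hk), mul_zero]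
    simp only [e1] at key
    have e2 := tendsto_nhds_unique (hT.pow 2) key
    have e3 : ∀ k : ℕ, (2 * (k : ℂ) + 1) * ((-1) ^ k * q ^ (k * (k + 1) / 2) * (P * (P⁻¹ * P⁻¹))) =
        P⁻¹ * ((-1) ^ k * (2 * (k : ℂ) + 1) * q ^ (k * (k + 1) / 2)) := by
      intro k; field_simp
    simp only [e3] at e2
    rw [tsum_mul_left] at e2
    rw [pow_succ, e2]
    field_simp
  · intro k
    refine Filter.Tendsto.const_mul _ (Filter.Tendsto.const_mul _ (Filter.Tendsto.mul ?_ (Filter.Tendsto.mul ?_ ?_)))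
    · refine hT.comp (Filter.tendsto_atTop_mono (fun n => ?_) Filter.tendsto_id)
      simp; omega
    · simpa [sub_eq_add_neg] using hRk (-k)
    · simpa [add_assoc] using hRk (k + 1)
  · refine Filter.Eventually.of_forall fun n k => ?_
    simp only [cJ, norm_mul, norm_pow, norm_neg, norm_one, one_pow, one_mul]
    have h1 : ‖(2 * (k : ℂ) + 1)‖ = 2 * (k : ℝ) + 1 := by
      have : (2 * (k : ℂ) + 1) = ((2 * (k : ℝ) + 1 : ℝ) : ℂ) := by push_cast; rfl
      rw [this, Complex.norm_real, Real.norm_of_nonneg (by positivity)]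
    rw [h1, mul_assoc (2 * (k : ℝ) + 1)]
    have h2 : ‖q‖ ^ (k * (k + 1) / 2) ≤ ‖q‖ ^ k :=
      pow_le_pow_of_le_one (norm_nonneg _) hq.le (tri_ge k)
    gcongr
    · exact hM _
    · exact hR _
    · exact hR _

lemma eta_cube {τ : ℂ} (hτ : 0 < τ.im) :
    dedekindEta τ ^ 3 = ∑' k : ℕ, (-1) ^ k * (2 * (k : ℂ) + 1) *
      Complex.exp ((π : ℂ) * I * τ * (2 * (k : ℂ) + 1) ^ 2 / 4) := by
  have hq : ‖nome τ‖ < 1 := by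
    rw [nome, Complex.norm_exp]
    simp
    positivity
  rw [dedekindEta, mul_pow, jacobi_cube (q := nome τ) (Complex.exp_ne_zero _) hq, ← tsum_mul_left]
  refine tsum_congr fun k => ?_
  have h2 : (2 : ℂ) * ((k * (k + 1) / 2 : ℕ) : ℂ) = k * (k + 1) := by
    have : 2 * (k * (k + 1) / 2) = k * (k + 1) :=
      Nat.mul_div_cancel' (Nat.even_mul_succ_self k).two_dvd
    exact_mod_cast this
  have : Complex.exp ((π : ℂ) * I * τ / 12) ^ 3 * nome τ ^ (k * (k + 1) / 2) =
      Complex.exp ((π : ℂ) * I * τ * (2 * (k : ℂ) + 1) ^ 2 / 4) := by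
    rw [nome, ← Complex.exp_nat_mul, ← Complex.exp_nat_mul, ← Complex.exp_add]
    congr 1
    push_cast
    linear_combination (π : ℂ) * I * τ * h2
  rw [← this]; ring
/-- Bounded continuous functions on the line. -/
abbrev BE := BoundedContinuousFunction ℝ ℂ

lemma lam_integrable {a : ℝ} (ha : 0 < a) (φ : BE) :
    MeasureTheory.IntegrableOn (fun r : ℝ => ((Real.exp (-a * r) : ℝ) : ℂ) * φ r) (Set.Ioi 0) := by
  have h1 : MeasureTheory.IntegrableOn (fun r : ℝ => ((Real.exp (-a * r) : ℝ) : ℂ)) (Set.Ioi 0) :=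
    (exp_neg_integrableOn_Ioi 0 ha).ofReal
  exact MeasureTheory.Integrable.mul_bdd (c := ‖φ‖) h1 φ.continuous.aestronglyMeasurable
    (Filter.Eventually.of_forall fun r => φ.norm_coe_le_norm r)

/-- Laplace transform functional. -/
def lam (a : ℝ) (ha : 0 < a) : BE →L[ℂ] ℂ :=
  LinearMap.mkContinuous
    { toFun := fun φ => ∫ r in Set.Ioi (0 : ℝ), ((Real.exp (-a * r) : ℝ) : ℂ) * φ r
      map_add' := fun φ ψ => by
        rw [← MeasureTheory.integral_add (lam_integrable ha φ) (lam_integrable ha ψ)]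
        congr 1; ext r; simp [mul_add]
      map_smul' := fun c φ => by
        simp only [RingHom.id_apply, smul_eq_mul]
        rw [← MeasureTheory.integral_const_mul]
        congr 1; ext r; simp; ring } (1 / a) (fun φ => by
      have hi := (exp_neg_integrableOn_Ioi 0 ha).mul_const ‖φ‖
      refine (MeasureTheory.norm_integral_le_of_norm_le hi ?_).trans ?_
      · refine Filter.Eventually.of_forall fun r => ?_
        rw [norm_mul, Complex.norm_real, Real.norm_of_nonneg (Real.exp_pos _).le]
        gcongr
        exact φ.norm_coe_le_norm r
      · rw [MeasureTheory.integral_mul_const, integral_exp_mul_Ioi (by linarith)]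
        simp [neg_div_neg_eq])

lemma lam_apply (a : ℝ) (ha : 0 < a) (φ : BE) :
    lam a ha φ = ∫ r in Set.Ioi (0 : ℝ), ((Real.exp (-a * r) : ℝ) : ℂ) * φ r := rfl

lemma lam_norm (a : ℝ) (ha : 0 < a) : ‖lam a ha‖ ≤ 1 / a :=
  LinearMap.mkContinuous_norm_le _ (by positivity) _

/-- `r ↦ (y + |r|)^(-1/2-k)`. -/
def phi (y : ℝ) (hy : 0 < y) (k : ℕ) : BE :=
  BoundedContinuousFunction.ofNormedAddCommGroup
    (fun r : ℝ => (((√(y + |r|))⁻¹ * ((y + |r|)⁻¹) ^ k : ℝ) : ℂ))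
    (by
      have h : ∀ r : ℝ, y + |r| ≠ 0 := fun r => by positivity
      have h' : ∀ r : ℝ, √(y + |r|) ≠ 0 := fun r => by positivity
      fun_prop (disch := assumption)) ((√y)⁻¹ * (y⁻¹) ^ k) (fun r => by
      rw [Complex.norm_real, Real.norm_of_nonneg (by positivity)]
      have : y ≤ y + |r| := by linarith [abs_nonneg r]
      gcongr)

lemma phi_apply (y : ℝ) (hy : 0 < y) (k : ℕ) (r : ℝ) :
    phi y hy k r = (((√(y + |r|))⁻¹ * ((y + |r|)⁻¹) ^ k : ℝ) : ℂ) := rfl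

lemma phi_norm (y : ℝ) (hy : 0 < y) (k : ℕ) : ‖phi y hy k‖ ≤ (√y)⁻¹ * (y⁻¹) ^ k :=
  BoundedContinuousFunction.norm_ofNormedAddCommGroup_le _ (by positivity) _

/-- Binomial coefficients of exponent -1/2. -/
def bc (k : ℕ) : ℝ := Ring.choose (-(1 / 2) : ℝ) k

lemma bc_one : bc 1 = -(1 / 2) := by simp [bc]

lemma bc_summable : Summable fun k => |bc k| * (1 / 2) ^ k := by
  have h := (binomialSeries ℝ (-(1 / 2) : ℝ)).summable_norm_mul_pow (r := 1 / 2)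
    (lt_of_lt_of_le (by
      rw [ENNReal.coe_lt_one_iff]
      rw [← NNReal.coe_lt_coe]; norm_num) binomialSeries_radius_ge_one)
  refine h.congr fun k => ?_
  rw [binomialSeries, FormalMultilinearSeries.ofScalars_norm]
  simp [bc]

lemma bc_hasSum {x : ℝ} (hx : |x| < 1) :
    HasSum (fun k => bc k * x ^ k) ((1 + x) ^ (-(1 / 2) : ℝ)) := by
  have h := (Real.one_add_rpow_hasFPowerSeriesOnBall_zero (a := (-(1 / 2) : ℝ))).hasSum (y := x)
    (by
      rw [← ENNReal.ofReal_one, Metric.eball_ofReal]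
      simpa using hx)
  rw [zero_add] at h
  have e : (fun k => bc k * x ^ k) =
      fun n => (binomialSeries ℝ (-(1 / 2) : ℝ) n) fun _ => x := by
    ext k
    rw [binomialSeries_apply]
    simp [bc]
  rw [e]
  exact h

/-- terms of the expansion of `(y + u + r)^(-1/2)`. -/
def FPhi (y : ℝ) (hy : 0 < y) (k : ℕ) (u : ℂ) : BE := ((bc k : ℂ) * u ^ k) • phi y hy k

/-- `(y + u + r)^(-1/2)` as a holomorphic function of `u`. -/
def Phi (y : ℝ) (hy : 0 < y) (u : ℂ) : BE := ∑' k, FPhi y hy k u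

lemma FPhi_bound (y : ℝ) (hy : 0 < y) (k : ℕ) (u : ℂ) (hu : u ∈ Metric.ball (0 : ℂ) (y / 2)) :
    ‖FPhi y hy k u‖ ≤ |bc k| * (1 / 2) ^ k * (√y)⁻¹ := by
  have hu' : ‖u‖ ≤ y / 2 := by simpa using (Metric.mem_ball.mp hu).le
  rw [FPhi, norm_smul, norm_mul, norm_pow, Complex.norm_real, Real.norm_eq_abs]
  calc |bc k| * ‖u‖ ^ k * ‖phi y hy k‖ ≤ |bc k| * (y / 2) ^ k * ((√y)⁻¹ * (y⁻¹) ^ k) := by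
        gcongr
        exact phi_norm y hy k
    _ = |bc k| * (1 / 2) ^ k * (√y)⁻¹ := by
        have : (y / 2) ^ k * (y⁻¹) ^ k = (1 / 2) ^ k := by
          rw [← mul_pow]; congr 1; field_simp
        rw [← this]; ring

lemma FPhi_diff (y : ℝ) (hy : 0 < y) (k : ℕ) : Differentiable ℂ (FPhi y hy k) := by
  unfold FPhi
  fun_prop

lemma bc_summable' (y : ℝ) : Summable fun k => |bc k| * (1 / 2) ^ k * (√y)⁻¹ :=
  bc_summable.mul_right _

lemma Phi_diff (y : ℝ) (hy : 0 < y) :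
    DifferentiableOn ℂ (Phi y hy) (Metric.ball (0 : ℂ) (y / 2)) :=
  Complex.differentiableOn_tsum_of_summable_norm (bc_summable' y)
    (fun k => (FPhi_diff y hy k).differentiableOn) Metric.isOpen_ball (FPhi_bound y hy)

lemma Phi_deriv (y : ℝ) (hy : 0 < y) :
    deriv (Phi y hy) 0 = (-(1 / 2) : ℂ) • phi y hy 1 := by
  have h := Complex.hasSum_deriv_of_summable_norm (bc_summable' y)
    (fun k => (FPhi_diff y hy k).differentiableOn) Metric.isOpen_ball (FPhi_bound y hy)
    (z := 0) (by simpa using hy)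
  have hd : ∀ k, deriv (FPhi y hy k) 0 = ((bc k : ℂ) * (k * 0 ^ (k - 1))) • phi y hy k := by
    intro k
    exact (((hasDerivAt_pow k (0 : ℂ)).const_mul (bc k : ℂ)).smul_const (phi y hy k)).deriv
  have h1 : HasSum (fun k => deriv (FPhi y hy k) 0) (deriv (FPhi y hy 1) 0) := by
    refine hasSum_single 1 fun k hk => ?_
    rw [hd]
    rcases k with _ | _ | k
    · simp
    · simp at hk
    · simp
  have := h.unique h1
  rw [show Phi y hy = fun w => ∑' k, FPhi y hy k w from rfl, this, hd]
  simp [bc_one]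

lemma Phi_zero (y : ℝ) (hy : 0 < y) : Phi y hy 0 = phi y hy 0 := by
  rw [Phi, tsum_eq_single 0]
  · simp [FPhi, bc]
  · intro k hk
    simp [FPhi, hk]

lemma Phi_apply (y : ℝ) (hy : 0 < y) (u : ℝ) (hu : |u| < y / 2) {r : ℝ} (hr : 0 ≤ r) :
    Phi y hy (u : ℂ) r = (((√(y + u + r))⁻¹ : ℝ) : ℂ) := by
  have hs : Summable fun k => FPhi y hy k (u : ℂ) :=
    Summable.of_norm_bounded (bc_summable' y) fun k => FPhi_bound y hy k _ (by simpa using hu)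
  have h1 : HasSum (fun k => FPhi y hy k (u : ℂ) r) (Phi y hy (u : ℂ) r) :=
    hs.hasSum.mapL (BoundedContinuousFunction.evalCLM ℂ r)
  have hyr : 0 < y + r := by positivity
  have hlt : |u / (y + r)| < 1 := by
    rw [abs_div, abs_of_pos hyr, div_lt_one hyr]; linarith
  have h2 := ((bc_hasSum hlt).mul_left ((√(y + r))⁻¹))
  have h3 := (Complex.hasSum_ofReal.mpr h2)
  have e : (fun k => FPhi y hy k (u : ℂ) r) =
      fun k => (((√(y + r))⁻¹ * (bc k * (u / (y + r)) ^ k) : ℝ) : ℂ) := by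
    ext k
    simp only [FPhi, BoundedContinuousFunction.coe_smul, phi_apply, abs_of_nonneg hr, smul_eq_mul]
    push_cast
    rw [div_eq_mul_inv, mul_pow]
    ring
  rw [e] at h1
  rw [h1.unique h3]
  congr 1
  have hpos : 0 < y + u + r := by linarith [(abs_lt.mp hu).1]
  have h4 : 1 + u / (y + r) = (y + u + r) / (y + r) := by field_simp; ring
  rw [h4, Real.rpow_neg (by positivity), ← Real.sqrt_eq_rpow, Real.sqrt_div hpos.le]
  have := Real.sqrt_pos.mpr hyr
  have := Real.sqrt_pos.mpr hpos
  field_simp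

lemma incGamma_eq {a y : ℝ} (ha : 0 < a) (hy : 0 < y) :
    incGamma (1 / 2) (a * y) =
      √a * Real.exp (-(a * y)) * ∫ r in Set.Ioi (0 : ℝ), Real.exp (-a * r) * (√(y + r))⁻¹ := by
  have h1 := MeasureTheory.integral_comp_mul_left_Ioi
    (fun t : ℝ => Real.exp (-t) * t ^ ((1 / 2 : ℝ) - 1)) y ha
  have h2 := (MeasureTheory.measurePreserving_add_left MeasureTheory.volume y).setIntegral_preimage_emb
    (measurableEmbedding_addLeft y)
    (fun s : ℝ => Real.exp (-(a * s)) * (a * s) ^ ((1 / 2 : ℝ) - 1)) (Set.Ioi y)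
  rw [← h2] at h1
  have h3 : (fun x => y + x) ⁻¹' Set.Ioi y = Set.Ioi (0 : ℝ) := by ext x; simp
  rw [h3] at h1
  have h4 : incGamma (1 / 2) (a * y) =
      a * ∫ x in Set.Ioi (0 : ℝ), Real.exp (-(a * (y + x))) * (a * (y + x)) ^ ((1 / 2 : ℝ) - 1) := by
    rw [h1, incGamma, smul_eq_mul, mul_inv_cancel_left₀ ha.ne']
  rw [h4, ← MeasureTheory.integral_const_mul, ← MeasureTheory.integral_const_mul]
  refine MeasureTheory.setIntegral_congr_fun measurableSet_Ioi fun r hr => ?_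
  have hr : 0 < r := hr
  have hp : 0 < y + r := by positivity
  rw [show (1 / 2 : ℝ) - 1 = -(1 / 2) by norm_num, Real.rpow_neg (by positivity),
    ← Real.sqrt_eq_rpow, Real.sqrt_mul ha.le, show -(a * (y + r)) = -(a * y) + -a * r by ring,
    Real.exp_add]
  have := Real.sqrt_pos.mpr ha
  have := Real.sqrt_pos.mpr hp
  field_simp
  rw [Real.sq_sqrt ha.le]

lemma lam_Phi {a : ℝ} (ha : 0 < a) (y : ℝ) (hy : 0 < y) (u : ℝ) (hu : |u| < y / 2) :
    ((incGamma (1 / 2) (a * (y + u)) : ℝ) : ℂ) =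
      (√a : ℂ) * Complex.exp (-(a * (y + u))) * lam a ha (Phi y hy u) := by
  have hpos : 0 < y + u := by linarith [(abs_lt.mp hu).1]
  rw [incGamma_eq ha hpos, lam_apply]
  push_cast
  congr 1
  rw [← integral_complex_ofReal]
  refine MeasureTheory.setIntegral_congr_fun measurableSet_Ioi fun r hr => ?_
  have hr : 0 < r := hr
  rw [Phi_apply y hy u hu hr.le]
  push_cast
  rfl

lemma lam_parts {a : ℝ} (ha : 0 < a) (y : ℝ) (hy : 0 < y) :
    (a : ℂ) * lam a ha (phi y hy 0) + 1 / 2 * lam a ha (phi y hy 1) = (((√y)⁻¹ : ℝ) : ℂ) := by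
  set F : ℝ → ℝ := fun r => Real.exp (-a * r) * (√(y + r))⁻¹ with hF
  set F' : ℝ → ℝ := fun r => -(a * (Real.exp (-a * r) * ((√(y + r))⁻¹ * ((y + r)⁻¹) ^ 0)) +
    1 / 2 * (Real.exp (-a * r) * ((√(y + r))⁻¹ * ((y + r)⁻¹) ^ 1))) with hF'
  have hF'r : ∀ r, F' r = -(a * (Real.exp (-a * r) * ((√(y + r))⁻¹ * ((y + r)⁻¹) ^ 0)) +
    1 / 2 * (Real.exp (-a * r) * ((√(y + r))⁻¹ * ((y + r)⁻¹) ^ 1))) := fun r => rfl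
  clear_value F'
  have hder : ∀ r, 0 ≤ r → HasDerivAt F (F' r) r := by
    intro r hr
    have hp : 0 < y + r := by positivity
    have hs := Real.sqrt_pos.mpr hp
    have h1 : HasDerivAt (fun r : ℝ => Real.exp (-a * r)) (Real.exp (-a * r) * (-a * 1)) r :=
      ((hasDerivAt_id r).const_mul (-a)).exp
    have h2 : HasDerivAt (fun r : ℝ => (√(y + r))⁻¹) (-(1 / (2 * √(y + r))) / √(y + r) ^ 2) r :=
      (((hasDerivAt_id r).const_add y).sqrt hp.ne').inv hs.ne'
    refine (h1.mul h2).congr_deriv ?_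
    rw [hF'r, Real.sq_sqrt hp.le]
    field_simp
    ring
  have hIntegr : ∀ k, MeasureTheory.IntegrableOn
      (fun r : ℝ => Real.exp (-a * r) * ((√(y + r))⁻¹ * ((y + r)⁻¹) ^ k)) (Set.Ioi 0) := by
    intro k
    have h := (lam_integrable ha (phi y hy k)).re
    refine MeasureTheory.IntegrableOn.congr_fun h (fun r hr => ?_) measurableSet_Ioi
    have hr : 0 < r := hr
    simp only [phi_apply, abs_of_pos hr]
    rw [← Complex.ofReal_mul]
    exact Complex.ofReal_re _
  have hlam : ∀ k, lam a ha (phi y hy k) = ((∫ r in Set.Ioi (0 : ℝ),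
      Real.exp (-a * r) * ((√(y + r))⁻¹ * ((y + r)⁻¹) ^ k) : ℝ) : ℂ) := by
    intro k
    rw [lam_apply, ← integral_complex_ofReal]
    refine MeasureTheory.setIntegral_congr_fun measurableSet_Ioi fun r hr => ?_
    have hr : 0 < r := hr
    simp only [phi_apply, abs_of_pos hr]
    push_cast
    rfl
  have hF'int : MeasureTheory.IntegrableOn F' (Set.Ioi 0) := by
    rw [hF']
    exact (((hIntegr 0).const_mul a).add ((hIntegr 1).const_mul (1 / 2))).neg
  have hlim : Filter.Tendsto F Filter.atTop (nhds 0) := by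
    have h1 : Filter.Tendsto (fun r : ℝ => Real.exp (-a * r)) Filter.atTop (nhds 0) := by
      refine Real.tendsto_exp_atBot.comp ?_
      exact Filter.tendsto_id.const_mul_atTop_of_neg (by linarith)
    have h2 : Filter.Tendsto (fun r : ℝ => (√(y + r))⁻¹) Filter.atTop (nhds 0) := by
      refine Filter.Tendsto.inv_tendsto_atTop ?_
      exact Real.tendsto_sqrt_atTop.comp (Filter.tendsto_atTop_add_const_left _ _ Filter.tendsto_id)
    simpa [hF] using h1.mul h2
  have key := MeasureTheory.integral_Ioi_of_hasDerivAt_of_tendsto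
    (hder 0 le_rfl).continuousAt.continuousWithinAt
    (fun r hr => hder r (le_of_lt hr)) hF'int hlim
  have e1 : ∫ r in Set.Ioi (0 : ℝ), F' r =
      -(a * (∫ r in Set.Ioi (0 : ℝ), Real.exp (-a * r) * ((√(y + r))⁻¹ * ((y + r)⁻¹) ^ 0)) +
        1 / 2 * ∫ r in Set.Ioi (0 : ℝ), Real.exp (-a * r) * ((√(y + r))⁻¹ * ((y + r)⁻¹) ^ 1)) := by
    simp only [hF'r]
    rw [MeasureTheory.integral_neg, MeasureTheory.integral_add ((hIntegr 0).const_mul a)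
      ((hIntegr 1).const_mul (1 / 2)), MeasureTheory.integral_const_mul,
      MeasureTheory.integral_const_mul]
  have e2 : F 0 = (√y)⁻¹ := by simp [hF]
  rw [e1, e2] at key
  rw [hlam, hlam, ← neg_inj, show -(((√y)⁻¹ : ℝ) : ℂ) = ((0 - (√y)⁻¹ : ℝ) : ℂ) by push_cast; ring,
    ← key]
  push_cast
  ring
/-- `π (2l+1)² / 2`. -/
def al (l : ℕ) : ℝ := π * (2 * l + 1) ^ 2 / 2

lemma al_pos (l : ℕ) : 0 < al l := by unfold al; positivity

lemma al_ge (l : ℕ) : 1 ≤ al l := by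
  unfold al
  have h1 := Real.pi_gt_three
  have h2 : (1 : ℝ) ≤ (2 * (l : ℝ) + 1) ^ 2 := one_le_pow₀ (by linarith [l.cast_nonneg (α := ℝ)])
  nlinarith

lemma al_sqrt (l : ℕ) : √(al l) = √(π / 2) * (2 * l + 1) := by
  rw [al, show π * (2 * (l : ℝ) + 1) ^ 2 / 2 = π / 2 * (2 * l + 1) ^ 2 by ring,
    Real.sqrt_mul (by positivity), Real.sqrt_sq (by positivity)]

/-- scalar coefficients. -/
def ps (l : ℕ) (W : ℂ) : ℂ := (-1) ^ l * (√(al l) : ℂ) * Complex.exp (I / 2 * al l * W)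

/-- terms of the functional valued series. -/
def FPsi (l : ℕ) (W : ℂ) : BE →L[ℂ] ℂ := ps l W • lam (al l) (al_pos l)

/-- functional valued theta series. -/
def Psi (W : ℂ) : BE →L[ℂ] ℂ := ∑' l, FPsi l W

lemma ps_hasDerivAt (l : ℕ) (W : ℂ) : HasDerivAt (ps l) (I / 2 * al l * ps l W) W := by
  have h : HasDerivAt (fun W : ℂ => Complex.exp (I / 2 * al l * W))
      (Complex.exp (I / 2 * al l * W) * (I / 2 * al l * 1)) W :=
    ((hasDerivAt_id W).const_mul (I / 2 * (al l : ℂ))).cexp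
  refine (h.const_mul ((-1) ^ l * (√(al l) : ℂ))).congr_deriv ?_
  unfold ps; ring

lemma FPsi_hasDerivAt (l : ℕ) (W : ℂ) :
    HasDerivAt (FPsi l) ((I / 2 * al l * ps l W) • lam (al l) (al_pos l)) W :=
  HasDerivAt.smul_const (F := BE →L[ℂ] ℂ) (ps_hasDerivAt l W) (lam (al l) (al_pos l))

lemma FPsi_bound {δ : ℝ} (hδ : 0 < δ) (l : ℕ) (W : ℂ) (hW : W ∈ {W : ℂ | δ < W.im}) :
    ‖FPsi l W‖ ≤ √(π / 2) * (2 * l + 1) * Real.exp (-δ / 2) ^ l := by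
  have hW : δ < W.im := hW
  have h1 : ‖lam (al l) (al_pos l)‖ ≤ 1 := (lam_norm _ _).trans (by
    rw [div_le_one (al_pos l)]; exact al_ge l)
  have h2 : ‖ps l W‖ ≤ √(π / 2) * (2 * l + 1) * Real.exp (-δ / 2) ^ l := by
    rw [ps, norm_mul, norm_mul, norm_pow, norm_neg, norm_one, one_pow, one_mul, Complex.norm_real,
      Real.norm_of_nonneg (Real.sqrt_nonneg _), al_sqrt, Complex.norm_exp, ← Real.exp_nat_mul]
    gcongr
    have e : (I / 2 * (al l : ℂ) * W).re = -(al l * W.im / 2) := by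
      have : I / 2 * (al l : ℂ) * W = ((al l / 2 : ℝ) : ℂ) * (I * W) := by push_cast; ring
      rw [this, Complex.re_ofReal_mul]
      simp
      ring
    rw [e]
    have h3 : (l : ℝ) ≤ al l := by
      unfold al
      have := Real.pi_gt_three
      have hl := l.cast_nonneg (α := ℝ)
      nlinarith [sq_nonneg (l : ℝ), mul_nonneg hl hl]
    have h4 : (l : ℝ) * δ ≤ al l * W.im := by
      have := al_pos l
      gcongr
    linarith
  calc ‖FPsi l W‖ = ‖ps l W‖ * ‖lam (al l) (al_pos l)‖ := norm_smul _ _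
    _ ≤ ‖ps l W‖ * 1 := by gcongr
    _ ≤ _ := by rw [mul_one]; exact h2

lemma FPsi_bd_summable {δ : ℝ} (hδ : 0 < δ) :
    Summable fun l : ℕ => √(π / 2) * (2 * (l : ℝ) + 1) * Real.exp (-δ / 2) ^ l := by
  have hlt : Real.exp (-δ / 2) < 1 := by rw [Real.exp_lt_one_iff]; linarith
  have h1 : Summable fun k : ℕ => (k : ℝ) * Real.exp (-δ / 2) ^ k := by
    simpa using summable_pow_mul_geometric_of_norm_lt_one 1 (r := Real.exp (-δ / 2))
      (by rwa [Real.norm_of_nonneg (Real.exp_pos _).le])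
  have h2 := summable_geometric_of_lt_one (Real.exp_pos (-δ / 2)).le hlt
  exact (((h1.mul_left 2).add h2).mul_left (√(π / 2))).congr fun k => by ring

lemma isOpen_half (δ : ℝ) : IsOpen {W : ℂ | δ < W.im} :=
  isOpen_lt continuous_const Complex.continuous_im

lemma Psi_diff {δ : ℝ} (hδ : 0 < δ) : DifferentiableOn ℂ Psi {W : ℂ | δ < W.im} :=
  Complex.differentiableOn_tsum_of_summable_norm (E := BE →L[ℂ] ℂ) (F := FPsi) (FPsi_bd_summable hδ)
    (fun l W _ => (FPsi_hasDerivAt l W).differentiableAt.differentiableWithinAt) (isOpen_half δ)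
    (FPsi_bound hδ)

lemma Psi_analytic {W : ℂ} (hW : 0 < W.im) : AnalyticAt ℂ Psi W :=
  (Psi_diff (half_pos hW)).analyticAt ((isOpen_half _).mem_nhds (half_lt_self hW))

lemma Psi_hasSum {W : ℂ} (hW : 0 < W.im) (φ : BE) :
    HasSum (fun l => ps l W * lam (al l) (al_pos l) φ) (Psi W φ) := by
  have hs : Summable fun l => FPsi l W :=
    Summable.of_norm_bounded (FPsi_bd_summable (half_pos hW))
      fun l => FPsi_bound (half_pos hW) l W (half_lt_self hW)
  exact hs.hasSum.mapL (ContinuousLinearMap.apply ℂ ℂ φ)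

lemma Psi_deriv_hasSum {W : ℂ} (hW : 0 < W.im) (φ : BE) :
    HasSum (fun l => I / 2 * al l * ps l W * lam (al l) (al_pos l) φ) (deriv Psi W φ) := by
  have h := Complex.hasSum_deriv_of_summable_norm (E := BE →L[ℂ] ℂ) (F := FPsi) (FPsi_bd_summable (half_pos hW))
    (fun l W _ => (FPsi_hasDerivAt l W).differentiableAt.differentiableWithinAt) (isOpen_half _)
    (FPsi_bound (half_pos hW)) (z := W) (half_lt_self hW)
  have h2 := h.mapL (ContinuousLinearMap.apply ℂ ℂ φ)
  have hd : ∀ l, deriv (FPsi l) W = (I / 2 * al l * ps l W) • lam (al l) (al_pos l) :=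
    fun l => HasDerivAt.deriv (F := BE →L[ℂ] ℂ) (FPsi_hasDerivAt l W)
  have e : (fun l => I / 2 * al l * ps l W * lam (al l) (al_pos l) φ) =
      fun l => ContinuousLinearMap.apply ℂ ℂ φ (deriv (FPsi l) W) := by
    funext l
    rw [hd l]
    rfl
  rw [e]
  exact h2

/-- The two variable function behind `Gfun`. -/
def KK (y : ℝ) (hy : 0 < y) (p : ℂ × ℂ) : ℂ := Psi p.1 (Phi y hy p.2)

lemma Phi_analytic (y : ℝ) (hy : 0 < y) : AnalyticAt ℂ (Phi y hy) 0 :=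
  (Phi_diff y hy).analyticAt (Metric.ball_mem_nhds _ (half_pos hy))

lemma analyticAt_clm_apply {X E F : Type*} [NormedAddCommGroup X] [NormedSpace ℂ X]
    [NormedAddCommGroup E] [NormedSpace ℂ E] [NormedAddCommGroup F] [NormedSpace ℂ F]
    {f : X → E →L[ℂ] F} {g : X → E} {x : X} (hf : AnalyticAt ℂ f x) (hg : AnalyticAt ℂ g x) :
    AnalyticAt ℂ (fun p => f p (g p)) x := by
  have hB : AnalyticAt ℂ (fun p : (E →L[ℂ] F) × E => p.1 p.2) (f x, g x) :=
    ContinuousLinearMap.analyticAt_bilinear (ContinuousLinearMap.id ℂ (E →L[ℂ] F)) _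
  exact hB.comp (f := fun p => (f p, g p)) (hf.prod hg)

lemma KK_analytic (y : ℝ) (hy : 0 < y) {W : ℂ} (hW : 0 < W.im) :
    AnalyticAt ℂ (KK y hy) (W, 0) := by
  have h1 : AnalyticAt ℂ (fun p : ℂ × ℂ => Psi p.1) (W, 0) :=
    AnalyticAt.comp (g := Psi) (f := Prod.fst) (Psi_analytic hW) analyticAt_fst
  have h2 : AnalyticAt ℂ (fun p : ℂ × ℂ => Phi y hy p.2) (W, 0) :=
    AnalyticAt.comp (g := Phi y hy) (f := Prod.snd) (Phi_analytic y hy) analyticAt_snd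
  exact analyticAt_clm_apply h1 h2

/-- The embedding `τ ↦ (-conj τ, Im τ)`. -/
def emb : ℂ →L[ℝ] ℂ × ℂ :=
  (-(Complex.conjCLE : ℂ →L[ℝ] ℂ)).prod (Complex.ofRealCLM.comp Complex.imCLM)

lemma emb_apply (τ : ℂ) : emb τ = (-(starRingEnd ℂ τ), (τ.im : ℂ)) := rfl

lemma Gfun_eq (y : ℝ) (hy : 0 < y) {τ : ℂ} (hτ : |τ.im - y| < y / 2) :
    Gfun τ = -(2 * I / (√π : ℂ)) * KK y hy (emb τ + (0, -(y : ℂ))) := by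
  have him : 0 < τ.im := by linarith [(abs_lt.mp hτ).1]
  have e0 : emb τ + (0, -(y : ℂ)) = (-(starRingEnd ℂ τ), ((τ.im - y : ℝ) : ℂ)) := by
    rw [emb_apply]
    ext <;> simp [sub_eq_add_neg]
  rw [Gfun, e0, KK]
  congr 1
  have hW : 0 < (-(starRingEnd ℂ τ)).im := by simpa using him
  rw [← (Psi_hasSum hW (Phi y hy ((τ.im - y : ℝ) : ℂ))).tsum_eq]
  refine tsum_congr fun l => ?_
  have h := lam_Phi (al_pos l) y hy (τ.im - y) hτ
  rw [add_sub_cancel] at h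
  rw [show π * (2 * (l : ℝ) + 1) ^ 2 * τ.im / 2 = al l * τ.im by unfold al; ring, h, ps]
  have hexp : Complex.exp (-(al l * (y + ((τ.im - y : ℝ) : ℂ)))) *
      Complex.exp (-(2 * (π : ℂ) * I * τ * ((2 * (l : ℂ) + 1) ^ 2) / 8)) =
      Complex.exp (I / 2 * al l * -(starRingEnd ℂ τ)) := by
    rw [← Complex.exp_add]
    congr 1
    have h1 : starRingEnd ℂ τ = τ - 2 * τ.im * I := by
      apply Complex.ext <;> simp
      ring
    rw [h1]
    simp only [al]
    push_cast
    linear_combination -(π : ℂ) * (2 * (l : ℂ) + 1) ^ 2 / 2 * τ.im * I_sq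
  rw [← hexp]
  ring

lemma Gfun_eventually {τ : ℂ} (hτ : 0 < τ.im) :
    Gfun =ᶠ[nhds τ] fun z => -(2 * I / (√π : ℂ)) * KK τ.im hτ (emb z + (0, -(τ.im : ℂ))) := by
  have h : ∀ᶠ z : ℂ in nhds τ, |z.im - τ.im| < τ.im / 2 := by
    have hc : ContinuousAt (fun z : ℂ => |z.im - τ.im|) τ := by fun_prop
    refine hc.eventually_lt_const ?_
    simpa using hτ
  filter_upwards [h] with z hz
  exact Gfun_eq τ.im hτ hz

lemma emb_base (τ : ℂ) : emb τ + (0, -(τ.im : ℂ)) = (-(starRingEnd ℂ τ), 0) := by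
  rw [emb_apply]; ext <;> simp

lemma Gfun_analytic {τ : ℂ} (hτ : 0 < τ.im) : AnalyticAt ℝ Gfun τ := by
  refine AnalyticAt.congr ?_ (Gfun_eventually hτ).symm
  refine analyticAt_const.mul ?_
  have hW : 0 < (-(starRingEnd ℂ τ)).im := by simpa using hτ
  have h1 : AnalyticAt ℝ (KK τ.im hτ) (emb τ + (0, -(τ.im : ℂ))) := by
    rw [emb_base]; exact (KK_analytic τ.im hτ hW).restrictScalars
  exact AnalyticAt.comp (g := KK τ.im hτ) (f := fun z => emb z + (0, -(τ.im : ℂ))) h1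
    ((emb.analyticAt τ).add analyticAt_const)

lemma KK_hasFDerivAt (y : ℝ) (hy : 0 < y) {W : ℂ} (hW : 0 < W.im) (v : ℂ × ℂ) :
    fderiv ℂ (KK y hy) (W, 0) v =
      v.1 * deriv Psi W (phi y hy 0) + v.2 * Psi W ((-(1 / 2) : ℂ) • phi y hy 1) := by
  have h1 : HasFDerivAt (fun p : ℂ × ℂ => Psi p.1) _ (W, (0 : ℂ)) :=
    HasFDerivAt.comp (W, (0 : ℂ)) (g := Psi) (f := Prod.fst)
      (Psi_analytic hW).differentiableAt.hasDerivAt.hasFDerivAt hasFDerivAt_fst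
  have h2 : HasFDerivAt (fun p : ℂ × ℂ => Phi y hy p.2) _ (W, (0 : ℂ)) :=
    HasFDerivAt.comp (W, (0 : ℂ)) (g := Phi y hy) (f := Prod.snd)
      (Phi_analytic y hy).differentiableAt.hasDerivAt.hasFDerivAt hasFDerivAt_snd
  have h3 := h1.clm_apply h2
  rw [show KK y hy = fun p : ℂ × ℂ => Psi p.1 (Phi y hy p.2) from rfl, h3.fderiv]
  simp [Phi_zero, Phi_deriv]
  ring

lemma Gfun_fderiv {τ : ℂ} (hτ : 0 < τ.im) (v : ℂ) :
    fderiv ℝ Gfun τ v = -(2 * I / (√π : ℂ)) *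
      (-(starRingEnd ℂ v) * deriv Psi (-(starRingEnd ℂ τ)) (phi τ.im hτ 0)
        + v.im * Psi (-(starRingEnd ℂ τ)) ((-(1 / 2) : ℂ) • phi τ.im hτ 1)) := by
  have hW : 0 < (-(starRingEnd ℂ τ)).im := by simpa using hτ
  have h1 : HasFDerivAt (KK τ.im hτ)
      ((fderiv ℂ (KK τ.im hτ) (-(starRingEnd ℂ τ), 0)).restrictScalars ℝ)
      (emb τ + (0, -(τ.im : ℂ))) := by
    rw [emb_base]
    exact (KK_analytic τ.im hτ hW).differentiableAt.hasFDerivAt.restrictScalars ℝ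
  have h2 : HasFDerivAt (fun z => emb z + (0, -(τ.im : ℂ))) emb τ :=
    emb.hasFDerivAt.add_const _
  have h3 := (HasFDerivAt.comp τ (g := KK τ.im hτ) h1 h2).const_mul (-(2 * I / (√π : ℂ)))
  rw [(Gfun_eventually hτ).fderiv_eq]
  have h4 := h3.fderiv
  simp only [Function.comp_def] at h4
  rw [h4]
  simp only [_root_.smul_apply, ContinuousLinearMap.comp_apply,
    ContinuousLinearMap.coe_restrictScalars', KK_hasFDerivAt τ.im hτ hW, emb_apply, smul_eq_mul]

lemma Gfun_wirtinger {τ : ℂ} (hτ : 0 < τ.im) :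
    wirtingerBar Gfun τ =
      -((√(2 * τ.im) : ℂ))⁻¹ * ∑' l : ℕ, starRingEnd ℂ ((-1) ^ l * (2 * (l : ℂ) + 1) *
      Complex.exp ((π : ℂ) * I * τ * (2 * (l : ℂ) + 1) ^ 2 / 4)) := by
  have hW : 0 < (-(starRingEnd ℂ τ)).im := by simpa using hτ
  have hs := ((Psi_deriv_hasSum hW (phi τ.im hτ 0)).add
    ((Psi_hasSum hW (phi τ.im hτ 1)).mul_left (I / 4)))
  have e : ∀ l, I / 2 * al l * ps l (-(starRingEnd ℂ τ)) * lam (al l) (al_pos l) (phi τ.im hτ 0) +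
      I / 4 * (ps l (-(starRingEnd ℂ τ)) * lam (al l) (al_pos l) (phi τ.im hτ 1)) =
      I / 2 * (((√τ.im)⁻¹ : ℝ) : ℂ) * (√(π / 2) : ℂ) *
        starRingEnd ℂ ((-1) ^ l * (2 * (l : ℂ) + 1) *
      Complex.exp ((π : ℂ) * I * τ * (2 * (l : ℂ) + 1) ^ 2 / 4)) := by
    intro l
    have h1 := lam_parts (al_pos l) τ.im hτ
    have h2 : ps l (-(starRingEnd ℂ τ)) = (√(π / 2) : ℂ) *
        starRingEnd ℂ ((-1) ^ l * (2 * (l : ℂ) + 1) *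
      Complex.exp ((π : ℂ) * I * τ * (2 * (l : ℂ) + 1) ^ 2 / 4)) := by
      rw [ps, al_sqrt]
      simp only [map_mul, map_pow, map_neg, map_one, map_add, ← Complex.exp_conj, map_div₀,
        Complex.conj_ofReal, Complex.conj_I, map_ofNat, map_natCast, al]
      push_cast
      rw [show I / 2 * ((π : ℂ) * (2 * (l : ℂ) + 1) ^ 2 / 2) * -(starRingEnd ℂ) τ =
        (π : ℂ) * -I * (starRingEnd ℂ) τ * (2 * (l : ℂ) + 1) ^ 2 / 4 by ring]
      ring
    rw [← h1, h2]
    ring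
  simp only [e] at hs
  have ht := hs.tsum_eq
  rw [tsum_mul_left] at ht
  rw [wirtingerBar, Gfun_fderiv hτ, Gfun_fderiv hτ]
  set S := ∑' l : ℕ, starRingEnd ℂ ((-1) ^ l * (2 * (l : ℂ) + 1) *
      Complex.exp ((π : ℂ) * I * τ * (2 * (l : ℂ) + 1) ^ 2 / 4))
  set A := deriv Psi (-(starRingEnd ℂ τ)) (phi τ.im hτ 0)
  set B := Psi (-(starRingEnd ℂ τ)) (phi τ.im hτ 1) with hB
  rw [map_smul, ← hB]
  have hc : ((√(2 * τ.im) : ℝ) : ℂ)⁻¹ = (√π : ℂ)⁻¹ * ((((√τ.im)⁻¹ : ℝ) : ℂ) * (√(π / 2) : ℂ)) := by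
    have h1 : √(π / 2) = √π / √2 := Real.sqrt_div Real.pi_pos.le 2
    have h2 : √(2 * τ.im) = √2 * √τ.im := Real.sqrt_mul (by norm_num) _
    have h3 := Real.sqrt_pos.mpr Real.pi_pos
    have h4 := Real.sqrt_pos.mpr hτ
    have h5 := Real.sqrt_pos.mpr (zero_lt_two' ℝ)
    rw [h1, h2]
    norm_cast
    field_simp
  rw [hc]
  simp only [map_one, Complex.conj_I, Complex.one_im, Complex.I_im, smul_eq_mul,
    Complex.ofReal_zero, Complex.ofReal_one]
  generalize (((√τ.im)⁻¹ : ℝ) : ℂ) = Y at *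
  generalize ((√(π / 2) : ℝ) : ℂ) = R at *
  linear_combination (-(2 * I / (√π : ℂ))) * ht +
    (Y * R * S / (√π : ℂ) - I * A / (√π : ℂ)) * I_sq

/-- `G` is real analytic on ℍ and `∂G/∂τ̄ = −(2 Im τ)^{−1/2} conj(η(τ)³)`:
the shadow of `Q` is proportional to `η³`. -/
theorem stmt18 :
    (∀ τ : ℂ, 0 < τ.im → AnalyticAt ℝ Gfun τ) ∧
    (∀ τ : ℂ, 0 < τ.im →
      wirtingerBar Gfun τ =
        -((Real.sqrt (2 * τ.im) : ℂ))⁻¹ * starRingEnd ℂ (dedekindEta τ ^ 3)) := by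
  refine ⟨fun τ hτ => Gfun_analytic hτ, fun τ hτ => ?_⟩
  rw [Gfun_wirtinger hτ, eta_cube hτ, Complex.conj_tsum]
end
end
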